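/- arXiv:2402.00848 — 7 statements merged into one kernel-verified Lean document; each statement's English description precedes it below -/
import Mathlib

section
/- Let (Ω,μ) be a probability space, let 2 < p < ∞ and 1 ≤ q < ∞, and let X_N be an N-dimensional linear space of real-valued measurable functions defined at every point of Ω with finite L_p(μ)-norm, satisfying the Nikol'skii inequality ‖f‖_p ≤ M‖f‖_2 for all f ∈ X_N. Suppose points ξ^1,…,ξ^m ∈ Ω and nonnegative weights λ_1,…,λ_m are such that (∑_{j=1}^m λ_j |f(ξ^j)|^q)^{1/q} ≤ D‖f‖_p for every f ∈ X_N. Then for every basis {u_i}_{i=1}^N of X_N that is orthonormal in L_2(Ω,μ) and every j ∈ {1,…,m}, one has λ_j (∑_{i=1}^N |u_i(ξ^j)|^2)^{q/2} ≤ (DM)^q. -/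
open MeasureTheory

/-- The `L_p(μ)`-norm of a function `f`, `(∫ |f|^p dμ)^(1/p)`. -/
noncomputable def LpNorm {Ω : Type*} [MeasurableSpace Ω] (μ : Measure Ω) (p : ℝ)
    (f : Ω → ℝ) : ℝ :=
  (∫ ω, |f ω| ^ p ∂μ) ^ (1 / p)

/-!
Put `S = ∑ i, u i (ξ j) ^ 2`. The reproducing kernel `K = ∑ i, u i (ξ j) • u i` of the span of `u`
at `ξ j` is extremal for evaluation at `ξ j`: by orthonormality `K (ξ j) = S`, whereas `‖K‖₂ = √S`.
Keeping only the `j`-th term of the discretization inequality and passing from `L_p` to `L_2` gives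
`lam j ^ (1 / q) * |f (ξ j)| ≤ D * M * ‖f‖₂` for all `f` in the span, and `f = K` yields
`lam j ^ (1 / q) * √S ≤ D * M`.
-/

theorem memLp_two_of_integrable_abs_rpow {Ω : Type*} [MeasurableSpace Ω] {μ : Measure Ω}
    [IsFiniteMeasure μ] {p : ℝ} (hp : 2 ≤ p) {f : Ω → ℝ} (hf : AEStronglyMeasurable f μ)
    (hint : Integrable (fun ω => |f ω| ^ p) μ) : MemLp f 2 μ := by
  have hp_pos : 0 < p := by linarith
  have memLp_p : MemLp f (ENNReal.ofReal p) μ := by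
    rw [← integrable_norm_rpow_iff hf (ENNReal.ofReal_pos.2 hp_pos).ne' ENNReal.ofReal_ne_top,
      ENNReal.toReal_ofReal hp_pos.le]
    exact hint
  exact memLp_p.mono_exponent (by simpa using ENNReal.ofReal_le_ofReal hp)

theorem lpNorm_two_eq_sqrt_integral_sq {Ω : Type*} [MeasurableSpace Ω] (μ : Measure Ω)
    (f : Ω → ℝ) : LpNorm μ 2 f = √(∫ ω, f ω ^ 2 ∂μ) := by
  simp only [LpNorm, Real.sqrt_eq_rpow, Real.rpow_two, sq_abs]

theorem rpow_one_div_mul_abs_le_weighted_sum {κ : Type*} [Fintype κ] {w : κ → ℝ}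
    (hw : ∀ k, 0 ≤ w k) {q : ℝ} (hq : 0 < q) (a : κ → ℝ) (j : κ) :
    w j ^ (1 / q) * |a j| ≤ (∑ k, w k * |a k| ^ q) ^ (1 / q) := by
  have term_nonneg (k : κ) : 0 ≤ w k * |a k| ^ q := mul_nonneg (hw k) (by positivity)
  calc w j ^ (1 / q) * |a j| = (w j * |a j| ^ q) ^ (1 / q) := by
        rw [Real.mul_rpow (hw j) (by positivity), one_div,
          Real.rpow_rpow_inv (abs_nonneg _) hq.ne']
    _ ≤ (∑ k, w k * |a k| ^ q) ^ (1 / q) :=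
        Real.rpow_le_rpow (term_nonneg j)
          (Finset.single_le_sum (fun k _ => term_nonneg k) (Finset.mem_univ j)) (by positivity)

/-- The reproducing kernel `∑ i, u i x * u i y`, as a function of `y`, of the span of a finite
family `u`. It represents evaluation at `x` on that span when `u` is orthonormal in `L_2`. -/
def reproducingKernel {Ω ι : Type*} [Fintype ι] (u : ι → Ω → ℝ) (x : Ω) : Ω → ℝ :=
  ∑ i, u i x • u i

section ReproducingKernel

variable {Ω ι : Type*} [Fintype ι] {u : ι → Ω → ℝ}

theorem reproducingKernel_mem_span (u : ι → Ω → ℝ) (x : Ω) :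
    reproducingKernel u x ∈ Submodule.span ℝ (Set.range u) :=
  Submodule.sum_mem _ fun i _ => Submodule.smul_mem _ _ (Submodule.subset_span ⟨i, rfl⟩)

theorem reproducingKernel_self (u : ι → Ω → ℝ) (x : Ω) :
    reproducingKernel u x x = ∑ i, u i x ^ 2 := by
  simp only [reproducingKernel, Finset.sum_apply, Pi.smul_apply, smul_eq_mul, sq]

variable [DecidableEq ι] [MeasurableSpace Ω] {μ : Measure Ω}

theorem integral_sq_sum_smul_of_orthonormal (hu : ∀ i, MemLp (u i) 2 μ)
    (hortho : ∀ i k, ∫ ω, u i ω * u k ω ∂μ = if i = k then 1 else 0) (a : ι → ℝ) :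
    ∫ ω, (∑ i, a i • u i) ω ^ 2 ∂μ = ∑ i, a i ^ 2 := by
  have integrable_term (i k : ι) : Integrable (fun ω => a i * a k * (u i ω * u k ω)) μ :=
    ((hu i).integrable_mul (hu k)).const_mul _
  calc ∫ ω, (∑ i, a i • u i) ω ^ 2 ∂μ
      = ∫ ω, ∑ i, ∑ k, a i * a k * (u i ω * u k ω) ∂μ := by
        simp only [Finset.sum_apply, Pi.smul_apply, smul_eq_mul, sq, Finset.sum_mul_sum,
          mul_mul_mul_comm]
    _ = ∑ i, ∑ k, a i * a k * ∫ ω, u i ω * u k ω ∂μ := by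
        rw [integral_finsetSum _ fun i _ => integrable_finsetSum _ fun k _ => integrable_term i k]
        simp only [integral_finsetSum _ fun k _ => integrable_term _ k, integral_const_mul]
    _ = ∑ i, a i ^ 2 := by simp [hortho, sq]

theorem lpNorm_two_reproducingKernel (hu : ∀ i, MemLp (u i) 2 μ)
    (hortho : ∀ i k, ∫ ω, u i ω * u k ω ∂μ = if i = k then 1 else 0) (x : Ω) :
    LpNorm μ 2 (reproducingKernel u x) = √(∑ i, u i x ^ 2) := by
  rw [lpNorm_two_eq_sqrt_integral_sq, reproducingKernel,
    integral_sq_sum_smul_of_orthonormal hu hortho]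

theorem mul_sqrt_sum_sq_le_of_mul_abs_apply_le (hu : ∀ i, MemLp (u i) 2 μ)
    (hortho : ∀ i k, ∫ ω, u i ω * u k ω ∂μ = if i = k then 1 else 0) {x : Ω} {c C : ℝ}
    (hC : 0 ≤ C) (heval : ∀ f ∈ Submodule.span ℝ (Set.range u), c * |f x| ≤ C * LpNorm μ 2 f) :
    c * √(∑ i, u i x ^ 2) ≤ C := by
  have sum_nonneg : 0 ≤ ∑ i, u i x ^ 2 := Finset.sum_nonneg fun i _ => sq_nonneg _
  have eval_kernel : c * ∑ i, u i x ^ 2 ≤ C * √(∑ i, u i x ^ 2) := by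
    simpa only [reproducingKernel_self, abs_of_nonneg sum_nonneg,
      lpNorm_two_reproducingKernel hu hortho] using heval _ (reproducingKernel_mem_span u x)
  rcases (Real.sqrt_nonneg (∑ i, u i x ^ 2)).eq_or_lt with sqrt_eq_zero | sqrt_pos
  · rwa [← sqrt_eq_zero, mul_zero]
  · refine le_of_mul_le_mul_right ?_ sqrt_pos
    rwa [mul_assoc, Real.mul_self_sqrt sum_nonneg]

theorem stmt_0_general {κ : Type*} [Fintype κ] {q C : ℝ} (hq : 0 < q) (hC : 0 ≤ C)
    {ξ : κ → Ω} {w : κ → ℝ} (hw : ∀ k, 0 ≤ w k) (hu : ∀ i, MemLp (u i) 2 μ)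
    (hortho : ∀ i k, ∫ ω, u i ω * u k ω ∂μ = if i = k then 1 else 0)
    (hdiscr : ∀ f ∈ Submodule.span ℝ (Set.range u),
      (∑ k, w k * |f (ξ k)| ^ q) ^ (1 / q) ≤ C * LpNorm μ 2 f) (j : κ) :
    w j * (∑ i, u i (ξ j) ^ 2) ^ (q / 2) ≤ C ^ q := by
  have hroot : w j ^ (1 / q) * √(∑ i, u i (ξ j) ^ 2) ≤ C :=
    mul_sqrt_sum_sq_le_of_mul_abs_apply_le hu hortho hC fun f hf =>
      (rpow_one_div_mul_abs_le_weighted_sum hw hq (fun k => f (ξ k)) j).trans (hdiscr f hf)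
  have weight_root_nonneg : 0 ≤ w j ^ (1 / q) := Real.rpow_nonneg (hw j) _
  calc w j * (∑ i, u i (ξ j) ^ 2) ^ (q / 2)
      = (w j ^ (1 / q) * √(∑ i, u i (ξ j) ^ 2)) ^ q := by
        rw [Real.mul_rpow weight_root_nonneg (Real.sqrt_nonneg _), one_div,
          Real.rpow_inv_rpow (hw j) hq.ne',
          Real.rpow_div_two_eq_sqrt _ (Finset.sum_nonneg fun i _ => sq_nonneg _)]
    _ ≤ C ^ q := Real.rpow_le_rpow (by positivity) hroot hq.le

end ReproducingKernel

/-- Lemma 2.1: weighted RDI `(∑ λ_j |f(ξ^j)|^q)^{1/q} ≤ D‖f‖_p` together with the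
Nikol'skii inequality `‖f‖_p ≤ M‖f‖_2` forces `λ_j (∑_i u_i(ξ^j)²)^{q/2} ≤ (DM)^q` for any
orthonormal basis `u` of `X_N`. -/
theorem stmt_0 {Ω : Type*} [MeasurableSpace Ω] (μ : Measure Ω) [IsProbabilityMeasure μ]
    (p q : ℝ) (hp : 2 < p) (hq : 1 ≤ q)
    (N : ℕ) (X : Submodule ℝ (Ω → ℝ)) (hdim : Module.finrank ℝ X = N)
    (hmeas : ∀ f ∈ X, Measurable f)
    (hfin : ∀ f ∈ X, Integrable (fun ω => |f ω| ^ p) μ)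
    (M : ℝ) (hM : 0 < M)
    (hNik : ∀ f ∈ X, LpNorm μ p f ≤ M * LpNorm μ 2 f)
    (m : ℕ) (ξ : Fin m → Ω) (lam : Fin m → ℝ) (hlam : ∀ j, 0 ≤ lam j)
    (D : ℝ) (hD : 0 < D)
    (hRDI : ∀ f ∈ X, (∑ j, lam j * |f (ξ j)| ^ q) ^ (1 / q) ≤ D * LpNorm μ p f)
    (u : Fin N → Ω → ℝ)
    (hu_mem : ∀ i, u i ∈ X)
    (hu_indep : LinearIndependent ℝ u)
    (hu_span : Submodule.span ℝ (Set.range u) = X)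
    (hu_ortho : ∀ i k, (∫ ω, u i ω * u k ω ∂μ) = if i = k then (1 : ℝ) else 0) :
    ∀ j, lam j * (∑ i, (u i (ξ j)) ^ 2) ^ (q / 2) ≤ (D * M) ^ q := by
  subst hu_span
  have hu_memLp (i : Fin N) : MemLp (u i) 2 μ :=
    memLp_two_of_integrable_abs_rpow hp.le (hmeas _ (hu_mem i)).aestronglyMeasurable
      (hfin _ (hu_mem i))
  refine stmt_0_general (one_pos.trans_le hq) (by positivity) hlam hu_memLp hu_ortho
    fun f hf => (hRDI f hf).trans ?_
  simpa only [mul_assoc] using mul_le_mul_of_nonneg_left (hNik f hf) hD.le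
end

section
/- For a ∈ (0,1/2], define f_a ∈ C[0,1] by f_a(x) = 1 for 0 ≤ x ≤ a, f_a(x) = 2 − x/a for a ≤ x ≤ 2a, and f_a(x) = 0 for 2a ≤ x ≤ 1. Let p,q ∈ [1,∞) and let X_N be a linear subspace of C[0,1] that contains the functions f_a and f_{a/2} for some a ∈ (0,1/2]. Suppose points ξ^1,…,ξ^m ∈ [0,1] are such that 0 < ((1/m)∑_{j=1}^m |f(ξ^j)|^q)^{1/q} ≤ D‖f‖_{L_p[0,1]} for every f ∈ X_N with f ≠ 0. Then m ≥ D^{−q}(2a)^{−q/p}. -/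
open MeasureTheory

/-- The function `f_a`: equal to `1` on `[0,a]`, linear (`2 - x/a`) on `[a,2a]`, and `0` on
`[2a,1]`. -/
noncomputable def fA (a : ℝ) (x : ℝ) : ℝ :=
  if x ≤ a then 1 else if x ≤ 2 * a then 2 - x / a else 0

/-! Positivity for `f_{a/2}`, which vanishes beyond `a`, puts some sample point `ξ^j` in `(-∞, a]`,
where `f_a = 1`. So the discrete norm of `f_a` is at least `m^{-1/q}`, while its `L_p` norm is at
most `(2a)^{1/p}`, since `0 ≤ f_a ≤ 1` and `f_a` vanishes beyond `2a`. -/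

/-- The normalized discrete `ℓ_q` norm `((1/m) ∑_j |f(ξ^j)|^q)^{1/q}` of the samples of `f` at the
points `ξ`. It is the discrete side of the discretization inequality. -/
noncomputable def discreteNorm {α : Type*} {m : ℕ} (q : ℝ) (ξ : Fin m → α) (f : α → ℝ) : ℝ :=
  ((1 / (m : ℝ)) * ∑ j, |f (ξ j)| ^ q) ^ (1 / q)

section discreteNorm

variable {α : Type*} {m : ℕ} {q : ℝ} {ξ : Fin m → α} {f : α → ℝ}

lemma exists_ne_zero_of_discreteNorm_pos (hq : 0 < q) (hf : 0 < discreteNorm q ξ f) :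
    ∃ j, f (ξ j) ≠ 0 := by
  contrapose! hf
  simp [discreteNorm, hf, Real.zero_rpow, hq.ne']

lemma one_div_rpow_mul_abs_le_discreteNorm (hq : 0 < q) (j : Fin m) :
    (1 / (m : ℝ)) ^ (1 / q) * |f (ξ j)| ≤ discreteNorm q ξ f := by
  have hterm : |f (ξ j)| ^ q ≤ ∑ i, |f (ξ i)| ^ q :=
    Finset.single_le_sum (f := fun i => |f (ξ i)| ^ q) (fun i _ => by positivity)
      (Finset.mem_univ j)
  calc (1 / (m : ℝ)) ^ (1 / q) * |f (ξ j)|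
      = ((1 / (m : ℝ)) * |f (ξ j)| ^ q) ^ (1 / q) := by
        rw [Real.mul_rpow (by positivity) (by positivity), one_div q,
          Real.rpow_rpow_inv (abs_nonneg _) hq.ne']
    _ ≤ discreteNorm q ξ f := by
        unfold discreteNorm
        gcongr

end discreteNorm

lemma integral_abs_rpow_le_measureReal {α : Type*} [MeasurableSpace α] {μ : Measure α}
    {f : α → ℝ} {s : Set α} {p : ℝ} (hp : 0 < p) (hs : MeasurableSet s) (hμs : μ s ≠ ⊤)
    (hf_le : ∀ x ∈ s, |f x| ≤ 1) (hf_zero : ∀ x ∉ s, f x = 0) :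
    ∫ x, |f x| ^ p ∂μ ≤ μ.real s := by
  have hle : ∀ x, |f x| ^ p ≤ s.indicator 1 x := fun x => by
    by_cases hx : x ∈ s
    · simpa [hx] using Real.rpow_le_one (abs_nonneg _) (hf_le x hx) hp.le
    · simp [hx, hf_zero x hx, Real.zero_rpow hp.ne']
  calc ∫ x, |f x| ^ p ∂μ ≤ ∫ x, s.indicator 1 x ∂μ :=
        integral_mono_of_nonneg (.of_forall fun x => by positivity)
          ((integrable_indicator_iff hs).2 (integrableOn_const hμs)) (.of_forall hle)
    _ = μ.real s := integral_indicator_one hs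

lemma rpow_neg_mul_rpow_neg_le_of_one_div_rpow_le {p q D V N : ℝ} (hq : 0 < q) (hD : 0 ≤ D)
    (hV : 0 ≤ V) (hN : 0 < N) (h : (1 / N) ^ (1 / q) ≤ D * V ^ (1 / p)) :
    D ^ (-q) * V ^ (-(q / p)) ≤ N := by
  have hpow : N⁻¹ ≤ D ^ q * V ^ (q / p) := calc
    N⁻¹ = ((1 / N) ^ (1 / q)) ^ q := by
      rw [one_div q, Real.rpow_inv_rpow (by positivity) hq.ne', one_div]
    _ ≤ (D * V ^ (1 / p)) ^ q := by gcongr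
    _ = D ^ q * V ^ (q / p) := by
      rw [Real.mul_rpow hD (by positivity), ← Real.rpow_mul hV, one_div_mul_eq_div]
  rw [Real.rpow_neg hD, Real.rpow_neg hV, ← mul_inv]
  exact inv_le_of_inv_le₀ hN hpow

section fA

variable {a x : ℝ}

lemma fA_eq_one (hx : x ≤ a) : fA a x = 1 := if_pos hx

lemma exists_mem_Icc_fA_ne_zero (ha : 0 ≤ a) : ∃ x ∈ Set.Icc (0 : ℝ) 1, fA a x ≠ 0 :=
  ⟨0, by simp, by simp [fA_eq_one ha]⟩

lemma fA_eq_zero (ha : 0 ≤ a) (hx : 2 * a < x) : fA a x = 0 := by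
  rw [fA, if_neg (by linarith), if_neg hx.not_ge]

lemma abs_fA_le_one (a x : ℝ) : |fA a x| ≤ 1 := by
  unfold fA
  split_ifs with hxa hx2a
  · simp
  · have ha : 0 < a := by linarith
    have hlower : 1 ≤ x / a := (one_le_div ha).2 (by linarith)
    have hupper : x / a ≤ 2 := (div_le_iff₀ ha).2 hx2a
    exact abs_le.2 ⟨by linarith, by linarith⟩
  · simp

lemma integral_abs_fA_rpow_le {p : ℝ} (hp : 0 < p) (ha : 0 ≤ a) :
    ∫ x in (0 : ℝ)..1, |fA a x| ^ p ≤ 2 * a := by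
  rw [intervalIntegral.integral_of_le zero_le_one]
  calc ∫ x in Set.Ioc (0 : ℝ) 1, |fA a x| ^ p
      ≤ (volume.restrict (Set.Ioc (0 : ℝ) 1)).real (Set.Iic (2 * a)) :=
        integral_abs_rpow_le_measureReal hp measurableSet_Iic (measure_ne_top _ _)
          (fun x _ => abs_fA_le_one a x) fun x hx => fA_eq_zero ha (not_le.1 hx)
    _ = volume.real (Set.Iic (2 * a) ∩ Set.Ioc 0 1) :=
        measureReal_restrict_apply measurableSet_Iic
    _ ≤ volume.real (Set.Ioc 0 (2 * a)) :=
        measureReal_mono (fun _ hx => ⟨hx.2.1, hx.1⟩) measure_Ioc_lt_top.ne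
    _ = 2 * a := by rw [Real.volume_real_Ioc_of_le (by positivity), sub_zero]

lemma exists_le_of_discreteNorm_fA_half_pos {q : ℝ} {m : ℕ} {ξ : Fin m → ℝ} (hq : 0 < q)
    (ha : 0 ≤ a) (hpos : 0 < discreteNorm q ξ (fA (a / 2))) : ∃ j, ξ j ≤ a := by
  obtain ⟨j, hj⟩ := exists_ne_zero_of_discreteNorm_pos hq hpos
  refine ⟨j, not_lt.1 fun hlt => hj (fA_eq_zero (by positivity) ?_)⟩
  rwa [mul_div_cancel₀ a two_ne_zero]

end fA

theorem stmt_4_general {p q a D : ℝ} {m : ℕ} {ξ : Fin m → ℝ} (hp : 0 < p) (hq : 0 < q)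
    (ha : 0 < a) (hD : 0 < D) (hpos : 0 < discreteNorm q ξ (fA (a / 2)))
    (hle : discreteNorm q ξ (fA a) ≤ D * (∫ x in (0 : ℝ)..1, |fA a x| ^ p) ^ (1 / p)) :
    D ^ (-q) * (2 * a) ^ (-(q / p)) ≤ m := by
  obtain ⟨j, hj⟩ := exists_le_of_discreteNorm_fA_half_pos hq ha.le hpos
  have hm : (0 : ℝ) < m := Nat.cast_pos.2 j.pos
  refine rpow_neg_mul_rpow_neg_le_of_one_div_rpow_le hq hD.le (by positivity) hm ?_
  have hI : 0 ≤ ∫ x in (0 : ℝ)..1, |fA a x| ^ p :=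
    intervalIntegral.integral_nonneg zero_le_one fun x _ => by positivity
  calc (1 / (m : ℝ)) ^ (1 / q) = (1 / (m : ℝ)) ^ (1 / q) * |fA a (ξ j)| := by
        rw [fA_eq_one hj, abs_one, mul_one]
    _ ≤ discreteNorm q ξ (fA a) := one_div_rpow_mul_abs_le_discreteNorm hq j
    _ ≤ D * (∫ x in (0 : ℝ)..1, |fA a x| ^ p) ^ (1 / p) := hle
    _ ≤ D * (2 * a) ^ (1 / p) := by
        gcongr
        exact integral_abs_fA_rpow_le hp ha.le

/-- Proposition 2.3: if `X_N ⊂ C[0,1]` contains `f_a` and `f_{a/2}` and points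
`ξ^1,…,ξ^m ∈ [0,1]` give an injective RDI `0 < ((1/m)∑_j |f(ξ^j)|^q)^{1/q} ≤ D‖f‖_{L_p[0,1]}`
for all nonzero `f ∈ X_N`, then `m ≥ D^{-q}(2a)^{-q/p}`. -/
theorem stmt_4 (p q : ℝ) (hp : 1 ≤ p) (hq : 1 ≤ q)
    (X : Submodule ℝ (ℝ → ℝ))
    (hcont : ∀ f ∈ X, ContinuousOn f (Set.Icc 0 1))
    (a : ℝ) (ha : a ∈ Set.Ioc (0 : ℝ) (1 / 2))
    (hfa : fA a ∈ X) (hfa2 : fA (a / 2) ∈ X)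
    (m : ℕ) (ξ : Fin m → ℝ) (hξ : ∀ j, ξ j ∈ Set.Icc (0 : ℝ) 1)
    (D : ℝ) (hD : 0 < D)
    (hRDI : ∀ f ∈ X, (∃ x ∈ Set.Icc (0 : ℝ) 1, f x ≠ 0) →
      0 < ((1 / (m : ℝ)) * ∑ j, |f (ξ j)| ^ q) ^ (1 / q) ∧
      ((1 / (m : ℝ)) * ∑ j, |f (ξ j)| ^ q) ^ (1 / q)
        ≤ D * (∫ x in (0 : ℝ)..1, |f x| ^ p) ^ (1 / p)) :
    (m : ℝ) ≥ D ^ (-q) * (2 * a) ^ (-(q / p)) :=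
  stmt_4_general (zero_lt_one.trans_le hp) (zero_lt_one.trans_le hq) ha.1 hD
    (hRDI _ hfa2 (exists_mem_Icc_fA_ne_zero (half_pos ha.1).le)).1
    (hRDI _ hfa (exists_mem_Icc_fA_ne_zero ha.1.le)).2
end

section
/- Let (Ω,μ) be a probability space, let 2 ≤ r < p < ∞, and let X_N be a linear space of real-valued measurable functions defined at every point of Ω with finite L_p(μ)-norm, satisfying the Nikol'skii inequality ‖f‖_p ≤ M‖f‖_2 for all f ∈ X_N. Suppose points ξ^1,…,ξ^m ∈ Ω and nonnegative weights λ_1,…,λ_m with λ_1 + … + λ_m = 1 satisfy (∑_{j=1}^m λ_j |f(ξ^j)|^p)^{1/p} ≤ D‖f‖_p for every f ∈ X_N. Then (∑_{j=1}^m λ_j |f(ξ^j)|^r)^{1/r} ≤ DM‖f‖_r for every f ∈ X_N. -/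
open MeasureTheory

theorem rpow_mean_le_rpow_mean_of_exponent_le {ι : Type*} (s : Finset ι) {w z : ι → ℝ}
    (hw : ∀ i ∈ s, 0 ≤ w i) (hw_sum : ∑ i ∈ s, w i = 1) (hz : ∀ i ∈ s, 0 ≤ z i)
    {r p : ℝ} (hr : 0 < r) (hrp : r ≤ p) :
    (∑ i ∈ s, w i * z i ^ r) ^ (1 / r) ≤ (∑ i ∈ s, w i * z i ^ p) ^ (1 / p) := by
  have hzp_nonneg : 0 ≤ ∑ i ∈ s, w i * z i ^ p :=
    Finset.sum_nonneg fun i hi => mul_nonneg (hw i hi) (Real.rpow_nonneg (hz i hi) p)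
  have hzr_nonneg : 0 ≤ ∑ i ∈ s, w i * z i ^ r :=
    Finset.sum_nonneg fun i hi => mul_nonneg (hw i hi) (Real.rpow_nonneg (hz i hi) r)
  have hpow : ∀ i ∈ s, w i * (z i ^ r) ^ (p / r) = w i * z i ^ p := fun i hi => by
    rw [← Real.rpow_mul (hz i hi), mul_div_cancel₀ p hr.ne']
  have hmean : ∑ i ∈ s, w i * z i ^ r ≤ (∑ i ∈ s, w i * z i ^ p) ^ (1 / (p / r)) := by
    rw [← Finset.sum_congr rfl hpow]
    exact Real.arith_mean_le_rpow_mean s w (fun i => z i ^ r) hw hw_sum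
      (fun i hi => Real.rpow_nonneg (hz i hi) r) ((one_le_div hr).2 hrp)
  calc (∑ i ∈ s, w i * z i ^ r) ^ (1 / r)
      ≤ ((∑ i ∈ s, w i * z i ^ p) ^ (1 / (p / r))) ^ (1 / r) := by gcongr
    _ = (∑ i ∈ s, w i * z i ^ p) ^ (1 / p) := by
      rw [← Real.rpow_mul hzp_nonneg]
      congr 1
      field_simp

section LpNorm

variable {Ω : Type*} [MeasurableSpace Ω] {μ : Measure Ω} {f : Ω → ℝ} {p q : ℝ}

theorem memLp_ofReal_iff_integrable_abs_rpow (hp : 0 < p) (hf : AEStronglyMeasurable f μ) :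
    MemLp f (ENNReal.ofReal p) μ ↔ Integrable (fun ω => |f ω| ^ p) μ := by
  rw [← integrable_norm_rpow_iff hf (by simpa using hp) ENNReal.ofReal_ne_top]
  simp only [ENNReal.toReal_ofReal hp.le, Real.norm_eq_abs]

theorem LpNorm_eq_toReal_eLpNorm (hp : 0 < p) (hf : AEStronglyMeasurable f μ) :
    LpNorm μ p f = (eLpNorm f (ENNReal.ofReal p) μ).toReal := by
  rw [toReal_eLpNorm hf,
    lpNorm_eq_integral_norm_rpow_toReal (by simpa using hp) ENNReal.ofReal_ne_top hf]
  simp [LpNorm, ENNReal.toReal_ofReal hp.le]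

theorem LpNorm_le_LpNorm_of_exponent_le [IsProbabilityMeasure μ] (hq : 0 < q) (hqp : q ≤ p)
    (hf : MemLp f (ENNReal.ofReal p) μ) : LpNorm μ q f ≤ LpNorm μ p f := by
  rw [LpNorm_eq_toReal_eLpNorm hq hf.aestronglyMeasurable,
    LpNorm_eq_toReal_eLpNorm (hq.trans_le hqp) hf.aestronglyMeasurable]
  exact ENNReal.toReal_mono hf.eLpNorm_ne_top
    (eLpNorm_le_eLpNorm_of_exponent_le (ENNReal.ofReal_le_ofReal hqp) hf.aestronglyMeasurable)

end LpNorm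

theorem stmt_5_general {Ω ι : Type*} [MeasurableSpace Ω] [Fintype ι] {μ : Measure Ω}
    [IsProbabilityMeasure μ] {q r p : ℝ} (hq : 0 < q) (hqr : q ≤ r) (hrp : r ≤ p)
    {f : Ω → ℝ} (hf : MemLp f (ENNReal.ofReal p) μ)
    {M : ℝ} (hM : 0 ≤ M) (hNik : LpNorm μ p f ≤ M * LpNorm μ q f)
    {ξ : ι → Ω} {lam : ι → ℝ} (hlam : ∀ j, 0 ≤ lam j) (hlamsum : ∑ j, lam j = 1)
    {D : ℝ} (hD : 0 ≤ D)
    (hWRDI : (∑ j, lam j * |f (ξ j)| ^ p) ^ (1 / p) ≤ D * LpNorm μ p f) :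
    (∑ j, lam j * |f (ξ j)| ^ r) ^ (1 / r) ≤ D * M * LpNorm μ r f := by
  have hf_r : MemLp f (ENNReal.ofReal r) μ := hf.mono_exponent (ENNReal.ofReal_le_ofReal hrp)
  calc (∑ j, lam j * |f (ξ j)| ^ r) ^ (1 / r)
      ≤ (∑ j, lam j * |f (ξ j)| ^ p) ^ (1 / p) :=
        rpow_mean_le_rpow_mean_of_exponent_le Finset.univ (fun j _ => hlam j) hlamsum
          (fun j _ => abs_nonneg (f (ξ j))) (hq.trans_le hqr) hrp
    _ ≤ D * LpNorm μ p f := hWRDI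
    _ ≤ D * (M * LpNorm μ q f) := by gcongr
    _ ≤ D * (M * LpNorm μ r f) := by
      gcongr
      exact LpNorm_le_LpNorm_of_exponent_le hq hqr hf_r
    _ = D * M * LpNorm μ r f := (mul_assoc D M _).symm

/-- comment on WRDI: for `2 ≤ r < p < ∞`, the Nikol'skii inequality
`‖f‖_p ≤ M‖f‖_2` and the WRDI `(∑_j λ_j |f(ξ^j)|^p)^{1/p} ≤ D‖f‖_p` with probability weights
imply the WRDI `(∑_j λ_j |f(ξ^j)|^r)^{1/r} ≤ DM‖f‖_r`. -/
theorem stmt_5 {Ω : Type*} [MeasurableSpace Ω] (μ : Measure Ω) [IsProbabilityMeasure μ]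
    (r p : ℝ) (hr : 2 ≤ r) (hrp : r < p)
    (X : Submodule ℝ (Ω → ℝ))
    (hmeas : ∀ f ∈ X, Measurable f)
    (hfin : ∀ f ∈ X, Integrable (fun ω => |f ω| ^ p) μ)
    (M : ℝ) (hM : 0 < M)
    (hNik : ∀ f ∈ X, LpNorm μ p f ≤ M * LpNorm μ 2 f)
    (m : ℕ) (ξ : Fin m → Ω) (lam : Fin m → ℝ)
    (hlam : ∀ j, 0 ≤ lam j) (hlamsum : ∑ j, lam j = 1)
    (D : ℝ) (hD : 0 < D)
    (hWRDI : ∀ f ∈ X, (∑ j, lam j * |f (ξ j)| ^ p) ^ (1 / p) ≤ D * LpNorm μ p f) :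
    ∀ f ∈ X, (∑ j, lam j * |f (ξ j)| ^ r) ^ (1 / r) ≤ D * M * LpNorm μ r f := by
  intro f hf
  have hf_memLp : MemLp f (ENNReal.ofReal p) μ :=
    (memLp_ofReal_iff_integrable_abs_rpow (by linarith) (hmeas f hf).aestronglyMeasurable).2
      (hfin f hf)
  exact stmt_5_general two_pos hr hrp.le hf_memLp hM.le (hNik f hf) hlam hlamsum hD.le (hWRDI f hf)
end

section
/- Let (Ω,μ) be a probability space, 1 ≤ p < ∞, 1 ≤ q < ∞, and let X be a set of real-valued measurable functions on Ω with finite L_p(μ)-norm. Suppose there are points ξ^1,…,ξ^m ∈ Ω and nonnegative weights λ_1,…,λ_m with λ_1 + … + λ_m ≤ C (C > 0) such that ‖f‖_p ≤ D(∑_{j=1}^m λ_j |f(ξ^j)|^q)^{1/q} for every f ∈ X. Then there exist m_0 ≤ (C²+1)m and points ζ^1,…,ζ^{m_0} ∈ Ω (each ζ^i equal to some ξ^j, repetitions allowed) such that ‖f‖_p ≤ D(C + C^{−1})^{1/q} ((1/m_0)∑_{j=1}^{m_0} |f(ζ^j)|^q)^{1/q} for every f ∈ X. -/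
open MeasureTheory

/-!
Replace each of the `m` points `ξ j` by `⌈w j * K⌉` copies of itself, where `K = C * m`. Rounding
up adds at most one copy per point, so there are at most `C * K + m = (C² + 1) * m` copies in total.
Averaging over them instead of weighting by `w` therefore costs at most a factor
`(C² + 1) * m / K = C + C⁻¹`.
-/

section Multiplicities

variable {ι : Type*} [Fintype ι]

theorem sum_natCeil_le_sum_add_card {R : Type*} [Semiring R] [LinearOrder R]
    [IsStrictOrderedRing R] [FloorSemiring R] {a : ι → R} (ha : ∀ j, 0 ≤ a j) :
    ((∑ j, ⌈a j⌉₊ : ℕ) : R) ≤ ∑ j, a j + Fintype.card ι := by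
  calc ((∑ j, ⌈a j⌉₊ : ℕ) : R) = ∑ j, (⌈a j⌉₊ : R) := Nat.cast_sum _ _
    _ ≤ ∑ j, (a j + 1) := Finset.sum_le_sum fun j _ => (Nat.ceil_lt_add_one (ha j)).le
    _ = ∑ j, a j + Fintype.card ι := by simp [Finset.sum_add_distrib]

variable {𝕜 : Type*} [Field 𝕜] [LinearOrder 𝕜] [IsStrictOrderedRing 𝕜]

theorem le_div_mul_div_sum_of_mul_le {n : ι → ℕ} {B K x : 𝕜} {j : ι} (hK : 0 < K)
    (hB : ((∑ k, n k : ℕ) : 𝕜) ≤ B) (hx : x * K ≤ n j) :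
    x ≤ B / K * (n j / (∑ k, n k : ℕ)) := by
  have n_le_sum : n j ≤ ∑ k, n k :=
    Finset.single_le_sum (fun _ _ => Nat.zero_le _) (Finset.mem_univ j)
  -- If the total is `0` then so is `n j`, and the frequency `0 / 0 = 0` is still correct.
  have sum_mul_frequency : ((∑ k, n k : ℕ) : 𝕜) * (n j / (∑ k, n k : ℕ)) = n j :=
    mul_div_cancel_of_imp' fun sum_eq_zero => by
      have : ∑ k, n k = 0 := by exact_mod_cast sum_eq_zero
      exact_mod_cast (by lia : n j = 0)
  calc x ≤ n j / K := (le_div_iff₀ hK).2 hx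
    _ = (∑ k, n k : ℕ) / K * (n j / (∑ k, n k : ℕ)) := by
        rw [div_mul_eq_mul_div, sum_mul_frequency]
    _ ≤ B / K * (n j / (∑ k, n k : ℕ)) := by gcongr

variable [FloorSemiring 𝕜]

theorem exists_multiplicities_of_sum_le {w : ι → 𝕜} (hw : ∀ j, 0 ≤ w j) {C : 𝕜} (hC : 0 < C)
    (hsum : ∑ j, w j ≤ C) :
    ∃ n : ι → ℕ, ((∑ j, n j : ℕ) : 𝕜) ≤ (C ^ 2 + 1) * Fintype.card ι ∧
      ∀ j, w j ≤ (C + C⁻¹) * (n j / (∑ k, n k : ℕ)) := by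
  set K : 𝕜 := C * Fintype.card ι with K_def
  have total_le : ((∑ j, ⌈w j * K⌉₊ : ℕ) : 𝕜) ≤ (C ^ 2 + 1) * Fintype.card ι :=
    calc ((∑ j, ⌈w j * K⌉₊ : ℕ) : 𝕜) ≤ ∑ j, w j * K + Fintype.card ι :=
          sum_natCeil_le_sum_add_card fun j => mul_nonneg (hw j) (by positivity)
      _ = (∑ j, w j) * K + Fintype.card ι := by rw [Finset.sum_mul]
      _ ≤ C * K + Fintype.card ι := by gcongr
      _ = (C ^ 2 + 1) * Fintype.card ι := by rw [K_def]; ring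
  refine ⟨fun j => ⌈w j * K⌉₊, total_le, fun j => ?_⟩
  have : Nonempty ι := ⟨j⟩
  have card_pos : (0 : 𝕜) < Fintype.card ι := by exact_mod_cast Fintype.card_pos
  have loss_factor : (C ^ 2 + 1) * Fintype.card ι / K = C + C⁻¹ := by
    rw [K_def]
    field_simp
  rw [← loss_factor]
  exact le_div_mul_div_sum_of_mul_le (n := fun j => ⌈w j * K⌉₊) (mul_pos hC card_pos) total_le
    (Nat.le_ceil _)

theorem exists_fin_sum_comp_eq_sum_nsmul (M : Type*) [AddCommMonoid M] (n : ι → ℕ) :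
    ∃ σ : Fin (∑ j, n j) → ι, ∀ g : ι → M, ∑ i, g (σ i) = ∑ j, n j • g j := by
  let e : Fin (∑ j, n j) ≃ Σ j, Fin (n j) := (Fintype.equivFinOfCardEq (by simp)).symm
  refine ⟨fun i => (e i).1, fun g => ?_⟩
  calc ∑ i, g (e i).1 = ∑ x : Σ j, Fin (n j), g x.1 := e.sum_comp fun x => g x.1
    _ = ∑ j, n j • g j := by simp [Fintype.sum_sigma]

theorem exists_fin_weighted_sum_le_average {w : ι → 𝕜} (hw : ∀ j, 0 ≤ w j) {C : 𝕜} (hC : 0 < C)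
    (hsum : ∑ j, w j ≤ C) :
    ∃ (m₀ : ℕ) (σ : Fin m₀ → ι), (m₀ : 𝕜) ≤ (C ^ 2 + 1) * Fintype.card ι ∧
      ∀ g : ι → 𝕜, (∀ j, 0 ≤ g j) →
        ∑ j, w j * g j ≤ (C + C⁻¹) * ((1 / (m₀ : 𝕜)) * ∑ i, g (σ i)) := by
  obtain ⟨n, total_le, weight_le⟩ := exists_multiplicities_of_sum_le hw hC hsum
  obtain ⟨σ, sum_comp_σ⟩ := exists_fin_sum_comp_eq_sum_nsmul 𝕜 n
  refine ⟨∑ j, n j, σ, total_le, fun g hg => ?_⟩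
  calc ∑ j, w j * g j ≤ ∑ j, (C + C⁻¹) * (n j / (∑ k, n k : ℕ)) * g j :=
        Finset.sum_le_sum fun j _ => mul_le_mul_of_nonneg_right (weight_le j) (hg j)
    _ = (C + C⁻¹) * ((1 / ((∑ k, n k : ℕ) : 𝕜)) * ∑ i, g (σ i)) := by
        simp only [sum_comp_σ, nsmul_eq_mul, Finset.mul_sum]
        exact Finset.sum_congr rfl fun j _ => by ring

end Multiplicities

theorem stmt_6_general {Ω E ι : Type*} [SeminormedAddGroup E] [Fintype ι]
    (N : (Ω → E) → ℝ) {q : ℝ} (hq : 0 < q) (X : Set (Ω → E))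
    (ξ : ι → Ω) {w : ι → ℝ} (hw : ∀ j, 0 ≤ w j)
    {C : ℝ} (hC : 0 < C) (hsum : ∑ j, w j ≤ C) {D : ℝ} (hD : 0 ≤ D)
    (hN : ∀ f ∈ X, N f ≤ D * (∑ j, w j * ‖f (ξ j)‖ ^ q) ^ (1 / q)) :
    ∃ (m₀ : ℕ) (ζ : Fin m₀ → Ω),
      (m₀ : ℝ) ≤ (C ^ 2 + 1) * Fintype.card ι ∧
      (∀ i, ∃ j, ζ i = ξ j) ∧
      ∀ f ∈ X, N f ≤ D * (C + C⁻¹) ^ (1 / q) *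
        ((1 / (m₀ : ℝ)) * ∑ i, ‖f (ζ i)‖ ^ q) ^ (1 / q) := by
  obtain ⟨m₀, σ, m₀_le, weighted_le⟩ := exists_fin_weighted_sum_le_average hw hC hsum
  refine ⟨m₀, ξ ∘ σ, m₀_le, fun i => ⟨σ i, rfl⟩, fun f hf => ?_⟩
  have weighted_nonneg : 0 ≤ ∑ j, w j * ‖f (ξ j)‖ ^ q :=
    Finset.sum_nonneg fun j _ => mul_nonneg (hw j) (by positivity)
  calc N f ≤ D * (∑ j, w j * ‖f (ξ j)‖ ^ q) ^ (1 / q) := hN f hf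
    _ ≤ D * ((C + C⁻¹) * ((1 / (m₀ : ℝ)) * ∑ i, ‖f (ξ (σ i))‖ ^ q)) ^ (1 / q) := by
        gcongr
        exact weighted_le (fun j => ‖f (ξ j)‖ ^ q) fun j => by positivity
    _ = D * (C + C⁻¹) ^ (1 / q) * ((1 / (m₀ : ℝ)) * ∑ i, ‖f (ξ (σ i))‖ ^ q) ^ (1 / q) := by
        rw [Real.mul_rpow (by positivity) (by positivity), mul_assoc]

/-- Proposition 3.1: a weighted LDI `‖f‖_p ≤ D (∑_j λ_j |f(ξ^j)|^q)^{1/q}` with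
nonnegative weights summing to at most `C` yields an equal-weight LDI with `m₀ ≤ (C²+1)m`
points (each taken among the `ξ^j`) and constant `D(C + C⁻¹)^{1/q}`. -/
theorem stmt_6 {Ω : Type*} [MeasurableSpace Ω] (μ : Measure Ω) [IsProbabilityMeasure μ]
    (p q : ℝ) (hp : 1 ≤ p) (hq : 1 ≤ q)
    (X : Set (Ω → ℝ))
    (hmeas : ∀ f ∈ X, Measurable f)
    (hfin : ∀ f ∈ X, Integrable (fun ω => |f ω| ^ p) μ)
    (m : ℕ) (ξ : Fin m → Ω) (lam : Fin m → ℝ) (hlam : ∀ j, 0 ≤ lam j)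
    (C : ℝ) (hC : 0 < C) (hsum : ∑ j, lam j ≤ C)
    (D : ℝ) (hD : 0 < D)
    (hWLDI : ∀ f ∈ X, LpNorm μ p f ≤ D * (∑ j, lam j * |f (ξ j)| ^ q) ^ (1 / q)) :
    ∃ (m₀ : ℕ) (ζ : Fin m₀ → Ω),
      (m₀ : ℝ) ≤ (C ^ 2 + 1) * m ∧
      (∀ i, ∃ j, ζ i = ξ j) ∧
      ∀ f ∈ X, LpNorm μ p f ≤ D * (C + C⁻¹) ^ (1 / q) *
        ((1 / (m₀ : ℝ)) * ∑ i, |f (ζ i)| ^ q) ^ (1 / q) := by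
  simpa only [Fintype.card_fin, Real.norm_eq_abs] using
    stmt_6_general (LpNorm μ p) (zero_lt_one.trans_le hq) X ξ hlam hC hsum hD.le hWLDI
end

section
/- There exists an absolute constant C > 0 with the following property: for every probability space (Ω,μ) and every N-dimensional linear space X_N of real-valued measurable functions defined at every point of Ω with finite L_2(μ)-norm, there exist points ξ^1,…,ξ^N ∈ Ω (repetitions allowed) such that ((1/N)∑_{j=1}^N |f(ξ^j)|²)^{1/2} ≤ C‖f‖_2 for every f ∈ X_N. -/
open MeasureTheory

/-!
Evaluation at `ω` on the `N`-dimensional space `X` is a vector `v ω ∈ ℝ^N`; in coordinates given by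
an `L_2(μ)`-orthonormal basis, `∫ v vᵀ dμ` is the identity, and the points `ξ j` have to satisfy
`∑ j, v (ξ j) v (ξ j)ᵀ ≤ c N · I`. They are chosen one at a time by the upper barrier argument of
Batson, Spielman and Srivastava: keep a barrier `u` above the spectrum of the current sum `A` with
potential `tr (u I - A)⁻¹` bounded. Moving the barrier up by `δ` lowers the potential by at
least `δ tr L⁻²`, where `L = (u + δ) I - A`, while adding `v vᵀ` raises it by
`vᵀ L⁻² v / (1 - vᵀ L⁻¹ v)` (Sherman–Morrison). Averaged over `μ`, the quadratic forms in
`v` become traces, so some point `ω` does not increase the potential on balance. With `m` points the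
barrier ends at `(√N + √m)²`, which is `4 N` for `m = N`.
-/

section Barrier

open Matrix

variable {ι : Type*} [Fintype ι]

theorem posDef_mul_self {A : Matrix ι ι ℝ} (hA : A.PosDef) : (A * A).PosDef := by
  classical
  simpa only [hA.isHermitian.eq] using
    PosDef.mul_conjTranspose_self A (vecMul_injective_of_isUnit hA.isUnit)

variable [DecidableEq ι] {M : Matrix ι ι ℝ}

theorem two_mul_mul_dotProduct_le (hM : M.PosDef) (v x : ι → ℝ) (s : ℝ) :
    2 * s * (v ⬝ᵥ x) ≤ x ⬝ᵥ (M *ᵥ x) + s ^ 2 * (v ⬝ᵥ (M⁻¹ *ᵥ v)) := by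
  have hsymm : Mᵀ = M := hM.isHermitian.eq
  have hMw : M *ᵥ (M⁻¹ *ᵥ v) = v := by
    rw [mulVec_mulVec, mul_nonsing_inv _ ((isUnit_iff_isUnit_det _).1 hM.isUnit), one_mulVec]
  have hwM : (M⁻¹ *ᵥ v) ⬝ᵥ (M *ᵥ x) = v ⬝ᵥ x := by
    rw [dotProduct_mulVec, ← mulVec_transpose, hsymm, hMw]
  have hsq := hM.posSemidef.dotProduct_mulVec_nonneg (x - s • (M⁻¹ *ᵥ v))
  simp only [star_trivial, mulVec_sub, mulVec_smul, hMw, sub_dotProduct, dotProduct_sub,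
    smul_dotProduct, dotProduct_smul, smul_eq_mul, hwM, dotProduct_comm x v,
    dotProduct_comm (M⁻¹ *ᵥ v) v] at hsq
  linarith

theorem posDef_sub_vecMulVec (hM : M.PosDef) {v : ι → ℝ} (hv : v ⬝ᵥ (M⁻¹ *ᵥ v) < 1) :
    (M - vecMulVec v v).PosDef := by
  refine .of_dotProduct_mulVec_pos
    (hM.isHermitian.sub (posSemidef_vecMulVec_self_star v).isHermitian) fun x hx => ?_
  have hpos : 0 < x ⬝ᵥ (M *ᵥ x) := hM.dotProduct_mulVec_pos hx
  have hyoung := two_mul_mul_dotProduct_le hM v x (v ⬝ᵥ x)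
  have hquad : x ⬝ᵥ ((M - vecMulVec v v) *ᵥ x) = x ⬝ᵥ (M *ᵥ x) - (v ⬝ᵥ x) ^ 2 := by
    rw [sub_mulVec, dotProduct_sub, vecMulVec_mulVec, op_smul_eq_smul, dotProduct_smul,
      dotProduct_comm x v, smul_eq_mul, sq]
  rw [star_trivial, hquad]
  rcases eq_or_ne (v ⬝ᵥ x) 0 with hvx | hvx
  · simpa [hvx] using hpos
  · have : 0 < (1 - v ⬝ᵥ (M⁻¹ *ᵥ v)) * (v ⬝ᵥ x) ^ 2 := mul_pos (sub_pos.2 hv) (by positivity)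
    linarith

theorem inv_sub_vecMulVec {K : Type*} [Field K] {A : Matrix ι ι K} (hA : IsUnit A) {u v : ι → K}
    (huv : v ⬝ᵥ (A⁻¹ *ᵥ u) ≠ 1) :
    (A - vecMulVec u v)⁻¹ =
      A⁻¹ + (1 - v ⬝ᵥ (A⁻¹ *ᵥ u))⁻¹ • vecMulVec (A⁻¹ *ᵥ u) (v ᵥ* A⁻¹) := by
  have hAinv : A * A⁻¹ = 1 := mul_nonsing_inv _ ((isUnit_iff_isUnit_det _).1 hA)
  have hne : 1 - v ⬝ᵥ (A⁻¹ *ᵥ u) ≠ 0 := sub_ne_zero.2 huv.symm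
  refine inv_eq_right_inv ?_
  rw [sub_mul, mul_add, mul_add, hAinv, mul_smul_comm, mul_smul_comm, mul_vecMulVec, mulVec_mulVec,
    hAinv, one_mulVec, vecMulVec_mul, vecMulVec_mul_vecMulVec, vecMulVec_smul]
  linear_combination (norm := module) (inv_mul_cancel₀ hne) • vecMulVec u (v ᵥ* A⁻¹)

theorem trace_inv_sub_vecMulVec {K : Type*} [Field K] {A : Matrix ι ι K} (hA : IsUnit A)
    {u v : ι → K} (huv : v ⬝ᵥ (A⁻¹ *ᵥ u) ≠ 1) :
    (A - vecMulVec u v)⁻¹.trace =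
      A⁻¹.trace + (v ⬝ᵥ ((A⁻¹ * A⁻¹) *ᵥ u)) / (1 - v ⬝ᵥ (A⁻¹ *ᵥ u)) := by
  rw [inv_sub_vecMulVec hA huv, trace_add, trace_smul, trace_vecMulVec, ← mulVec_mulVec,
    dotProduct_comm (A⁻¹ *ᵥ u), ← dotProduct_mulVec v, smul_eq_mul, inv_mul_eq_div]

theorem trace_inv_add_smul_one_le (hM : M.PosDef) {δ : ℝ} (hδ : 0 ≤ δ) :
    (M + δ • 1)⁻¹.trace + δ * ((M + δ • 1)⁻¹ * (M + δ • 1)⁻¹).trace ≤ M⁻¹.trace := by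
  have hL : (M + δ • 1).PosDef := hM.add_posSemidef (PosSemidef.one.smul hδ)
  set L := M + δ • (1 : Matrix ι ι ℝ) with hLdef
  have hiff : IsUnit M ↔ IsUnit L := iff_of_true hM.isUnit hL.isUnit
  have hresolvent : M⁻¹ = L⁻¹ + δ • (M⁻¹ * L⁻¹) := by
    rw [← sub_eq_iff_eq_add', inv_sub_inv hiff, hLdef]
    simp
  have hresolvent' : M⁻¹ = L⁻¹ + δ • (L⁻¹ * M⁻¹) := by
    rw [← sub_eq_iff_eq_add', ← neg_sub, inv_sub_inv hiff.symm, hLdef]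
    simp
  have hexpand : M⁻¹ = L⁻¹ + δ • (L⁻¹ * L⁻¹) + δ ^ 2 • (L⁻¹ * M⁻¹ * L⁻¹) := by
    conv_lhs => rw [hresolvent, hresolvent']
    rw [add_mul, smul_add, smul_mul_assoc, smul_smul, add_assoc, sq]
  have hremainder : 0 ≤ (L⁻¹ * M⁻¹ * L⁻¹).trace := by
    have := (hM.inv.posSemidef.mul_mul_conjTranspose_same L⁻¹).trace_nonneg
    rwa [hL.inv.isHermitian.eq] at this
  rw [congrArg trace hexpand, trace_add, trace_add, trace_smul, trace_smul, smul_eq_mul,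
    smul_eq_mul]
  exact le_add_of_nonneg_right (by positivity)

/-- Every positive semidefinite quadratic form `x ↦ xᵀ P x` takes on `V` a value not exceeding
`tr P`, which is its mean under an isotropic distribution. This is all that the barrier argument
needs to know about the vectors from which it selects. -/
def MeetsTraceBound {ι : Type*} [Fintype ι] (V : Set (ι → ℝ)) : Prop :=
  ∀ P : Matrix ι ι ℝ, P.PosSemidef → ∃ x ∈ V, x ⬝ᵥ (P *ᵥ x) ≤ P.trace

theorem MeetsTraceBound.exists_barrier_step [Nonempty ι] {V : Set (ι → ℝ)}
    (hV : MeetsTraceBound V) (hM : M.PosDef) {δ : ℝ} (hδ : 0 < δ)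
    (hpotential : M⁻¹.trace + δ⁻¹ ≤ 1) :
    ∃ x ∈ V, (M + δ • 1 - vecMulVec x x).PosDef ∧
      (M + δ • 1 - vecMulVec x x)⁻¹.trace ≤ M⁻¹.trace := by
  have hL : (M + δ • 1).PosDef := hM.add (PosDef.one.smul hδ)
  have hshift := trace_inv_add_smul_one_le hM hδ.le
  set L := M + δ • (1 : Matrix ι ι ℝ)
  have hLL : (L⁻¹ * L⁻¹).PosDef := posDef_mul_self hL.inv
  set τ := (L⁻¹ * L⁻¹).trace
  have hτ : 0 < τ := hLL.trace_pos
  -- The weight on `L⁻²` makes the growth of `tr L⁻¹` caused by `x` at most the drop `δ τ`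
  -- gained by the shift.
  obtain ⟨x, hxV, hx⟩ := hV (L⁻¹ + (δ * τ)⁻¹ • (L⁻¹ * L⁻¹))
    (hL.inv.posSemidef.add (hLL.posSemidef.smul (by positivity)))
  have hweight : (δ * τ)⁻¹ * τ = δ⁻¹ := by field_simp
  rw [trace_add, trace_smul, add_mulVec, dotProduct_add, smul_mulVec, dotProduct_smul,
    smul_eq_mul, smul_eq_mul, hweight] at hx
  have hb : 0 ≤ x ⬝ᵥ ((L⁻¹ * L⁻¹) *ᵥ x) := hLL.posSemidef.dotProduct_mulVec_nonneg x
  set a := x ⬝ᵥ (L⁻¹ *ᵥ x)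
  set b := x ⬝ᵥ ((L⁻¹ * L⁻¹) *ᵥ x)
  have hδτ : 0 < δ * τ := by positivity
  have ha : a < 1 := by
    have : 0 ≤ (δ * τ)⁻¹ * b := by positivity
    linarith
  have hgrowth : b / (1 - a) ≤ δ * τ := by
    have : (δ * τ)⁻¹ * b ≤ 1 - a := by linarith
    rwa [div_le_iff₀ (sub_pos.2 ha), ← inv_mul_le_iff₀ hδτ]
  refine ⟨x, hxV, posDef_sub_vecMulVec hL ha, ?_⟩
  rw [trace_inv_sub_vecMulVec hL.isUnit ha.ne]
  linarith

theorem MeetsTraceBound.exists_posDef_sub_sum_vecMulVec [Nonempty ι] {V : Set (ι → ℝ)}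
    (hV : MeetsTraceBound V) {u δ : ℝ} (hu : 0 < u) (hδ : 0 < δ)
    (huδ : Fintype.card ι / u + δ⁻¹ ≤ 1) (m : ℕ) :
    ∃ x : Fin m → ι → ℝ, (∀ j, x j ∈ V) ∧
      ((u + m * δ) • 1 - ∑ j, vecMulVec (x j) (x j)).PosDef ∧
      ((u + m * δ) • 1 - ∑ j, vecMulVec (x j) (x j))⁻¹.trace ≤ Fintype.card ι / u := by
  induction m with
  | zero =>
    have hinv : (u • (1 : Matrix ι ι ℝ))⁻¹ = u⁻¹ • 1 :=
      inv_eq_right_inv (by rw [smul_mul_smul_comm, mul_inv_cancel₀ hu.ne', one_smul, one_mul])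
    have hstart : (u • (1 : Matrix ι ι ℝ))⁻¹.trace ≤ Fintype.card ι / u := by
      rw [hinv, trace_smul, trace_one, smul_eq_mul, inv_mul_eq_div]
    exact ⟨Fin.elim0, fun j => j.elim0, by simpa using PosDef.one.smul hu, by simpa using hstart⟩
  | succ m ih =>
    obtain ⟨x, hxV, hpos, htrace⟩ := ih
    obtain ⟨y, hyV, hpos', htrace'⟩ := hV.exists_barrier_step hpos hδ (by linarith)
    let x' : Fin (m + 1) → ι → ℝ := Fin.snoc x y
    have hx'V : ∀ j, x' j ∈ V := Fin.lastCases (by simpa [x'] using hyV) (by simpa [x'] using hxV)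
    have hsucc : (u + (m + 1 : ℕ) * δ) • (1 : Matrix ι ι ℝ) - ∑ j, vecMulVec (x' j) (x' j) =
        (u + m * δ) • 1 - ∑ j, vecMulVec (x j) (x j) + δ • 1 - vecMulVec y y := by
      simp only [x', Fin.sum_univ_castSucc, Fin.snoc_castSucc, Fin.snoc_last]
      push_cast
      module
    exact ⟨x', hx'V, hsucc ▸ hpos', hsucc ▸ htrace'.trans htrace⟩

theorem MeetsTraceBound.exists_posSemidef_sub_sum_vecMulVec {V : Set (ι → ℝ)}
    (hV : MeetsTraceBound V) (m : ℕ) :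
    ∃ x : Fin m → ι → ℝ, (∀ j, x j ∈ V) ∧
      ((√(Fintype.card ι) + √m) ^ 2 • 1 - ∑ j, vecMulVec (x j) (x j)).PosSemidef := by
  rcases isEmpty_or_nonempty ι with hι | hι
  · obtain ⟨x, hxV, -⟩ := hV 0 .zero
    exact ⟨fun _ => x, fun _ => hxV, by
      rw [Subsingleton.elim (_ - _) 0]
      exact .zero⟩
  rcases m.eq_zero_or_pos with rfl | hm
  · exact ⟨Fin.elim0, fun j => j.elim0, by simpa using PosSemidef.one.smul (Nat.cast_nonneg _)⟩
  have hp : 0 < √(Fintype.card ι : ℝ) := Real.sqrt_pos.2 (mod_cast Fintype.card_pos)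
  have hq : 0 < √(m : ℝ) := Real.sqrt_pos.2 (mod_cast hm)
  have hp_sq : √(Fintype.card ι : ℝ) ^ 2 = Fintype.card ι := Real.sq_sqrt (Nat.cast_nonneg _)
  have hq_sq : √(m : ℝ) ^ 2 = m := Real.sq_sqrt (Nat.cast_nonneg _)
  set p := √(Fintype.card ι : ℝ)
  set q := √(m : ℝ)
  -- These `u` and `δ` minimise the final position `u + m δ` subject to `n / u + δ⁻¹ ≤ 1`.
  obtain ⟨x, hxV, hpos, -⟩ := hV.exists_posDef_sub_sum_vecMulVec
    (u := p * (p + q)) (δ := (p + q) / q) (by positivity) (by positivity)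
    (by rw [← hp_sq]; field_simp; exact le_rfl) m
  have hfinal : p * (p + q) + m * ((p + q) / q) = (p + q) ^ 2 := by
    rw [← hq_sq]; field_simp
  exact ⟨x, hxV, hfinal ▸ hpos.posSemidef⟩

theorem sum_dotProduct_sq_le_of_posSemidef {κ : Type*} [Fintype κ] {c : ℝ} {x : κ → ι → ℝ}
    (h : (c • 1 - ∑ j, vecMulVec (x j) (x j)).PosSemidef) (a : ι → ℝ) :
    ∑ j, (x j ⬝ᵥ a) ^ 2 ≤ c * (a ⬝ᵥ a) := by
  have hnonneg := h.dotProduct_mulVec_nonneg a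
  simp only [star_trivial, sub_mulVec, smul_mulVec, one_mulVec, dotProduct_sub, dotProduct_smul,
    sum_mulVec, dotProduct_sum, vecMulVec_mulVec, op_smul_eq_smul, smul_eq_mul,
    dotProduct_comm a (x _), ← sq] at hnonneg
  exact sub_nonneg.1 hnonneg

end Barrier

section Subisotropic

open Matrix

variable {Ω ι : Type*} [MeasurableSpace Ω] {μ : Measure Ω} [Fintype ι]

/-- The random vector `v` has a diagonal second moment matrix `∫ v vᵀ dμ` with entries at most `1`.
Diagonal entries below `1` leave room for coordinates that vanish almost everywhere. -/
structure IsSubisotropic {Ω ι : Type*} [MeasurableSpace Ω] (μ : Measure Ω) (v : Ω → ι → ℝ) :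
    Prop where
  integrable_mul (i j : ι) : Integrable (fun ω => v ω i * v ω j) μ
  integral_mul_eq_zero {i j : ι} (hij : i ≠ j) : ∫ ω, v ω i * v ω j ∂μ = 0
  integral_mul_self_le_one (i : ι) : ∫ ω, v ω i * v ω i ∂μ ≤ 1

theorem dotProduct_mulVec_eq_sum_sum {R : Type*} [CommSemiring R] (P : Matrix ι ι R) (x : ι → R) :
    x ⬝ᵥ (P *ᵥ x) = ∑ i, ∑ j, P i j * (x i * x j) := by
  simp only [dotProduct, mulVec, Finset.mul_sum]
  exact Finset.sum_congr rfl fun i _ => Finset.sum_congr rfl fun j _ => by ring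

namespace IsSubisotropic

variable {v : Ω → ι → ℝ}

theorem integrable_dotProduct_mulVec (hv : IsSubisotropic μ v) (P : Matrix ι ι ℝ) :
    Integrable (fun ω => v ω ⬝ᵥ (P *ᵥ v ω)) μ := by
  simp only [dotProduct_mulVec_eq_sum_sum]
  exact integrable_finsetSum _ fun i _ => integrable_finsetSum _ fun j _ =>
    (hv.integrable_mul i j).const_mul _

theorem integral_dotProduct_mulVec_le_trace (hv : IsSubisotropic μ v) {P : Matrix ι ι ℝ}
    (hP : P.PosSemidef) : ∫ ω, v ω ⬝ᵥ (P *ᵥ v ω) ∂μ ≤ P.trace := by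
  have hint (i j : ι) : Integrable (fun ω => P i j * (v ω i * v ω j)) μ :=
    (hv.integrable_mul i j).const_mul _
  calc ∫ ω, v ω ⬝ᵥ (P *ᵥ v ω) ∂μ
    _ = ∑ i, ∑ j, P i j * ∫ ω, v ω i * v ω j ∂μ := by
      simp only [dotProduct_mulVec_eq_sum_sum]
      rw [integral_finsetSum _ fun i _ => integrable_finsetSum _ fun j _ => hint i j]
      simp only [integral_finsetSum _ fun j _ => hint _ j, integral_const_mul]
    _ = ∑ i, P i i * ∫ ω, v ω i * v ω i ∂μ :=
      Finset.sum_congr rfl fun i _ => Fintype.sum_eq_single i fun j hij => by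
        rw [hv.integral_mul_eq_zero hij.symm, mul_zero]
    _ ≤ ∑ i, P i i := Finset.sum_le_sum fun i _ =>
      mul_le_of_le_one_right hP.diag_nonneg (hv.integral_mul_self_le_one i)

theorem meetsTraceBound_image [IsProbabilityMeasure μ] (hv : IsSubisotropic μ v) {S : Set Ω}
    (hS : ∀ᵐ ω ∂μ, ω ∈ S) : MeetsTraceBound (v '' S) := by
  intro P hP
  obtain ⟨ω, hωS, hω⟩ :=
    exists_notMem_null_le_integral (hv.integrable_dotProduct_mulVec P) (ae_iff.1 hS)
  exact ⟨v ω, ⟨ω, not_not.1 hωS, rfl⟩, hω.trans (hv.integral_dotProduct_mulVec_le_trace hP)⟩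

theorem exists_sum_dotProduct_sq_le [IsProbabilityMeasure μ] (hv : IsSubisotropic μ v) {S : Set Ω}
    (hS : ∀ᵐ ω ∂μ, ω ∈ S) (m : ℕ) :
    ∃ ξ : Fin m → Ω, (∀ j, ξ j ∈ S) ∧ ∀ a : ι → ℝ,
      ∑ j, (v (ξ j) ⬝ᵥ a) ^ 2 ≤ (√(Fintype.card ι) + √m) ^ 2 * (a ⬝ᵥ a) := by
  classical
  obtain ⟨x, hx, hpos⟩ := (hv.meetsTraceBound_image hS).exists_posSemidef_sub_sum_vecMulVec m
  choose ξ hξS hξ using hx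
  obtain rfl : (fun j => v (ξ j)) = x := funext hξ
  exact ⟨ξ, hξS, sum_dotProduct_sq_le_of_posSemidef hpos⟩

end IsSubisotropic

end Subisotropic

section Discretization

variable {Ω : Type*} [MeasurableSpace Ω] {μ : Measure Ω} {X : Submodule ℝ (Ω → ℝ)}

theorem integrable_mul_of_forall_integrable_sq (hX : ∀ f ∈ X, Integrable (fun ω => f ω ^ 2) μ)
    {f g : Ω → ℝ} (hf : f ∈ X) (hg : g ∈ X) : Integrable (fun ω => f ω * g ω) μ := by
  have hpolar : (fun ω => f ω * g ω) = fun ω => ((f + g) ω ^ 2 - (f - g) ω ^ 2) / 4 := by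
    ext ω
    simp only [Pi.add_apply, Pi.sub_apply]
    ring
  rw [hpolar]
  exact ((hX _ (X.add_mem hf hg)).sub (hX _ (X.sub_mem hf hg))).div_const 4

/-- The `L_2(μ)` inner product `∫ f g dμ` on a space `X` of square-integrable functions. Elements
of `X` are functions rather than classes modulo `μ`, so the form may be degenerate. -/
noncomputable def l2Form (hX : ∀ f ∈ X, Integrable (fun ω => f ω ^ 2) μ) :
    LinearMap.BilinForm ℝ X :=
  have hint (f g : X) : Integrable (fun ω => f.1 ω * g.1 ω) μ :=
    integrable_mul_of_forall_integrable_sq hX f.2 g.2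
  LinearMap.mk₂ ℝ (fun f g => ∫ ω, f.1 ω * g.1 ω ∂μ)
    (fun f₁ f₂ g => by simp [add_mul, integral_add (hint f₁ g) (hint f₂ g)])
    (fun c f g => by simp [mul_assoc, integral_const_mul])
    (fun f g₁ g₂ => by simp [mul_add, integral_add (hint f g₁) (hint f g₂)])
    (fun c f g => by simp [mul_left_comm, integral_const_mul])

theorem l2Form_apply (hX : ∀ f ∈ X, Integrable (fun ω => f ω ^ 2) μ) (f g : X) :
    l2Form hX f g = ∫ ω, f.1 ω * g.1 ω ∂μ := rfl

theorem l2Form_isSymm (hX : ∀ f ∈ X, Integrable (fun ω => f ω ^ 2) μ) :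
    LinearMap.IsSymm (l2Form hX) :=
  ⟨fun f g => by simp [l2Form_apply, mul_comm]⟩

theorem apply_self_eq_sum_of_isOrthoᵢ {R V κ : Type*} [CommRing R] [AddCommGroup V] [Module R V]
    [Fintype κ] {B : LinearMap.BilinForm R V} {e : Module.Basis κ R V} (he : B.IsOrthoᵢ e) (x : V) :
    B x x = ∑ i, e.repr x i ^ 2 * B (e i) (e i) := by
  have hoff (i j : κ) (hij : j ≠ i) : e.repr x i • e.repr x j • B (e i) (e j) = 0 := by
    rw [LinearMap.isOrthoᵢ_def.1 he i j hij.symm, smul_zero, smul_zero]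
  calc B x x
    _ = ∑ i, ∑ j, e.repr x i • e.repr x j • B (e i) (e j) := by
      rw [← LinearMap.sum_repr_mul_repr_mul e e, Finsupp.sum_fintype _ _ (by simp)]
      simp [Finsupp.sum_fintype]
    _ = ∑ i, e.repr x i ^ 2 * B (e i) (e i) := Finset.sum_congr rfl fun i _ => by
      rw [Fintype.sum_eq_single i (hoff i), smul_smul, sq, smul_eq_mul]

theorem isSubisotropic_div_sqrt {κ : Type*} {e : κ → Ω → ℝ}
    (hint : ∀ i j, Integrable (fun ω => e i ω * e j ω) μ)
    (horth : Pairwise fun i j => ∫ ω, e i ω * e j ω ∂μ = 0) :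
    IsSubisotropic μ fun ω i => e i ω / √(∫ ω, e i ω * e i ω ∂μ) where
  integrable_mul i j := by
    simpa only [div_mul_div_comm] using (hint i j).div_const _
  integral_mul_eq_zero hij := by
    simp only [div_mul_div_comm, integral_div, horth hij, zero_div]
  integral_mul_self_le_one i := by
    have hnonneg : 0 ≤ ∫ ω, e i ω * e i ω ∂μ := integral_nonneg fun ω => mul_self_nonneg _
    simp only [div_mul_div_comm, integral_div, Real.mul_self_sqrt hnonneg]
    exact div_self_le_one _

theorem ae_eq_zero_of_integral_mul_self_eq_zero {f : Ω → ℝ}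
    (hint : Integrable (fun ω => f ω * f ω) μ) (hf : ∫ ω, f ω * f ω ∂μ = 0) :
    ∀ᵐ ω ∂μ, f ω = 0 := by
  filter_upwards [(integral_eq_zero_iff_of_nonneg (fun ω => mul_self_nonneg _) hint).1 hf]
    with ω hω using mul_self_eq_zero.1 hω

open Matrix in
theorem exists_isSubisotropic_dotProduct [FiniteDimensional ℝ X]
    (hX : ∀ f ∈ X, Integrable (fun ω => f ω ^ 2) μ) :
    ∃ (v : Ω → Fin (Module.finrank ℝ X) → ℝ) (a : X → Fin (Module.finrank ℝ X) → ℝ),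
      IsSubisotropic μ v ∧ (∀ᵐ ω ∂μ, ∀ f : X, f.1 ω = v ω ⬝ᵥ a f) ∧
      ∀ f : X, ∫ ω, f.1 ω ^ 2 ∂μ = a f ⬝ᵥ a f := by
  obtain ⟨e, he⟩ := LinearMap.BilinForm.exists_orthogonal_basis (l2Form_isSymm hX)
  have hint i j : Integrable (fun ω => (e i).1 ω * (e j).1 ω) μ :=
    integrable_mul_of_forall_integrable_sq hX (e i).2 (e j).2
  let d i := ∫ ω, (e i).1 ω * (e i).1 ω ∂μ
  have hd i : 0 ≤ d i := integral_nonneg fun ω => mul_self_nonneg _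
  -- Where `d i = 0`, the quotient is `0` by convention, which is correct for almost every `ω`.
  refine ⟨fun ω i => (e i).1 ω / √(d i), fun f i => √(d i) * e.repr f i,
    isSubisotropic_div_sqrt hint fun i j hij => he hij, ?_, fun f => ?_⟩
  · have hnull : ∀ᵐ ω ∂μ, ∀ i, d i = 0 → (e i).1 ω = 0 :=
      ae_all_iff.2 fun i => Filter.eventually_imp_distrib_left.2
        (ae_eq_zero_of_integral_mul_self_eq_zero (hint i i))
    filter_upwards [hnull] with ω hω f
    have hexpand : f.1 ω = ∑ i, e.repr f i * (e i).1 ω := by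
      conv_lhs => rw [← e.sum_repr f]
      simp only [Submodule.coe_sum, Finset.sum_apply, Submodule.coe_smul, Pi.smul_apply,
        smul_eq_mul]
    rw [hexpand]
    refine Finset.sum_congr rfl fun i _ => ?_
    by_cases hi : d i = 0
    · simp [hω i hi]
    · have : √(d i) ≠ 0 := (Real.sqrt_ne_zero (hd i)).2 hi
      field_simp
  · calc ∫ ω, f.1 ω ^ 2 ∂μ
      _ = l2Form hX f f := by simp only [l2Form_apply, sq]
      _ = ∑ i, e.repr f i ^ 2 * d i := apply_self_eq_sum_of_isOrthoᵢ he f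
      _ = ∑ i, √(d i) * e.repr f i * (√(d i) * e.repr f i) :=
        Finset.sum_congr rfl fun i _ => by
          rw [mul_mul_mul_comm, Real.mul_self_sqrt (hd i), sq, mul_comm]

theorem exists_sum_sq_le_integral_sq [IsProbabilityMeasure μ] [FiniteDimensional ℝ X]
    (hX : ∀ f ∈ X, Integrable (fun ω => f ω ^ 2) μ) (m : ℕ) :
    ∃ ξ : Fin m → Ω, ∀ f ∈ X,
      ∑ j, f (ξ j) ^ 2 ≤ (√(Module.finrank ℝ X) + √m) ^ 2 * ∫ ω, f ω ^ 2 ∂μ := by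
  obtain ⟨v, a, hv, hrepr, hnorm⟩ := exists_isSubisotropic_dotProduct hX
  obtain ⟨ξ, hξ, hle⟩ := hv.exists_sum_dotProduct_sq_le hrepr m
  refine ⟨ξ, fun f hf => ?_⟩
  calc ∑ j, f (ξ j) ^ 2
    _ = ∑ j, (v (ξ j) ⬝ᵥ a ⟨f, hf⟩) ^ 2 :=
      Finset.sum_congr rfl fun j _ => congrArg (· ^ 2) (hξ j ⟨f, hf⟩)
    _ ≤ (√(Module.finrank ℝ X) + √m) ^ 2 * ∫ ω, f ω ^ 2 ∂μ := by
      simpa only [Fintype.card_fin, ← hnorm ⟨f, hf⟩] using hle (a ⟨f, hf⟩)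

theorem LpNorm_two (f : Ω → ℝ) : LpNorm μ 2 f = √(∫ ω, f ω ^ 2 ∂μ) := by
  simp only [LpNorm, Real.rpow_two, sq_abs, Real.sqrt_eq_rpow]

theorem stmt_8_general [IsProbabilityMeasure μ] [FiniteDimensional ℝ X]
    (hX : ∀ f ∈ X, Integrable (fun ω => |f ω| ^ (2 : ℝ)) μ) {m : ℕ} (hm : 0 < m) :
    ∃ ξ : Fin m → Ω, ∀ f ∈ X,
      ((1 / (m : ℝ)) * ∑ j, |f (ξ j)| ^ (2 : ℝ)) ^ ((1 : ℝ) / 2)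
        ≤ (1 + √(Module.finrank ℝ X / m)) * LpNorm μ 2 f := by
  simp only [Real.rpow_two, sq_abs] at hX ⊢
  obtain ⟨ξ, hξ⟩ := exists_sum_sq_le_integral_sq hX m
  refine ⟨ξ, fun f hf => ?_⟩
  have hsqrt : √(∑ j, f (ξ j) ^ 2) ≤ (√(Module.finrank ℝ X) + √m) * √(∫ ω, f ω ^ 2 ∂μ) := by
    rw [← Real.sqrt_sq (by positivity : 0 ≤ √(Module.finrank ℝ X : ℝ) + √m),
      ← Real.sqrt_mul (sq_nonneg _)]
    exact Real.sqrt_le_sqrt (hξ f hf)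
  have : 0 < √(m : ℝ) := Real.sqrt_pos.2 (mod_cast hm)
  calc ((1 / (m : ℝ)) * ∑ j, f (ξ j) ^ 2) ^ ((1 : ℝ) / 2)
    _ = √(∑ j, f (ξ j) ^ 2) / √m := by
      rw [← Real.sqrt_eq_rpow, one_div_mul_eq_div, Real.sqrt_div' _ (Nat.cast_nonneg m)]
    _ ≤ (√(Module.finrank ℝ X) + √m) * √(∫ ω, f ω ^ 2 ∂μ) / √m := by gcongr
    _ = (1 + √(Module.finrank ℝ X / m)) * LpNorm μ 2 f := by
      rw [LpNorm_two, Real.sqrt_div' _ (Nat.cast_nonneg m)]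
      field_simp
      ring

end Discretization

/-- Proposition 4.1, via Lunin: there is an absolute constant `C > 0` such that
every `N`-dimensional subspace `X_N ⊂ L_2` of a probability space satisfies
`X_N ∈ RD(N,2,2,C)`: there are `N` points with `((1/N)∑_j |f(ξ^j)|²)^{1/2} ≤ C‖f‖_2`. -/
theorem stmt_8 :
    ∃ C : ℝ, 0 < C ∧
      ∀ (Ω : Type) [MeasurableSpace Ω], ∀ (μ : Measure Ω) [IsProbabilityMeasure μ],
        ∀ (N : ℕ) (X : Submodule ℝ (Ω → ℝ)), Module.finrank ℝ X = N →
          (∀ f ∈ X, Measurable f) →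
          (∀ f ∈ X, Integrable (fun ω => |f ω| ^ (2 : ℝ)) μ) →
          ∃ ξ : Fin N → Ω, ∀ f ∈ X,
            ((1 / (N : ℝ)) * ∑ j, |f (ξ j)| ^ (2 : ℝ)) ^ ((1 : ℝ) / 2)
              ≤ C * LpNorm μ 2 f := by
  refine ⟨2, two_pos, fun Ω _ μ _ N X hN _ hX => ?_⟩
  obtain rfl | hpos := N.eq_zero_or_pos
  · exact ⟨Fin.elim0, fun f _ => by simp [LpNorm_two]⟩
  · have : FiniteDimensional ℝ X := Module.finite_of_finrank_pos (hN ▸ hpos)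
    simpa [hN, hpos.ne', one_add_one_eq_two] using stmt_8_general hX hpos
end

section
/- Let 1 ≤ p < ∞, let Ω be a compact subset of ℝ^d with a Borel probability measure μ, and let X_N be an N-dimensional subspace of C(Ω). Assume: (A1) points ξ^1,…,ξ^m ∈ Ω and positive weights w_1,…,w_m satisfy ‖u‖_p ≤ D(∑_{j=1}^m w_j |u(ξ^j)|^p)^{1/p} for all u ∈ X_N; (A2) ∑_{j=1}^m w_j ≤ W; and the Nikol'skii inequality ‖u‖_∞ ≤ M‖u‖_p holds for all u ∈ X_N. Then for every f ∈ C(Ω) and every u ∈ X_N satisfying (∑_{j=1}^m w_j |f(ξ^j) − u(ξ^j)|^p)^{1/p} ≤ (∑_{j=1}^m w_j |f(ξ^j) − g(ξ^j)|^p)^{1/p} for all g ∈ X_N, one has ‖f − u‖_∞ ≤ (2MDW^{1/p} + 1) d(f, X_N)_∞. -/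
open MeasureTheory

/-- The uniform norm `sup_ω |f ω|`. -/
noncomputable def supNorm {Ω : Type*} (f : Ω → ℝ) : ℝ :=
  ⨆ ω, |f ω|

/-- The best uniform approximation `d(f, X)_∞ = inf_{g ∈ X} ‖f - g‖_∞`. -/
noncomputable def distInfty {Ω : Type*} [TopologicalSpace Ω]
    (f : C(Ω, ℝ)) (X : Submodule ℝ C(Ω, ℝ)) : ℝ :=
  ⨅ g : X, supNorm (fun ω => f ω - (g : C(Ω, ℝ)) ω)

/-!
Let `s` be a seminorm dominated by the norm, `s v ≤ c * ‖v‖`, which controls the norm on `X`,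
`‖v‖ ≤ K * s v`. If `u ∈ X` minimizes `s (f - ·)` over `X`, then for every `g ∈ X` the triangle
inequality gives `s (g - u) ≤ s (f - g) + s (f - u) ≤ 2 * s (f - g)`, hence
`‖f - u‖ ≤ ‖f - g‖ + K * s (g - u) ≤ (2 * K * c + 1) * ‖f - g‖`. The theorem is the case of the
weighted `ℓ_p` seminorm of point samples on `C(Ω)`, with `K = M * D` and `c = W ^ (1 / p)`.
-/

open Metric

section Minimizer

theorem addGroupSeminorm_sub_le_two_mul_of_le {V : Type*} [AddCommGroup V] {s : AddGroupSeminorm V}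
    {f g u : V} (hu : s (f - u) ≤ s (f - g)) : s (g - u) ≤ 2 * s (f - g) :=
  calc s (g - u) = s ((f - u) - (f - g)) := by rw [sub_sub_sub_cancel_left]
    _ ≤ s (f - u) + s (f - g) := map_sub_le_add s _ _
    _ ≤ 2 * s (f - g) := by linarith

variable {V : Type*} [SeminormedAddCommGroup V] {s : AddGroupSeminorm V} {K c : ℝ} {f u : V}

theorem norm_sub_le_mul_norm_sub_of_addGroupSeminorm_le {g : V} (hK : 0 ≤ K)
    (hfg : s (f - g) ≤ c * ‖f - g‖) (hgu : ‖g - u‖ ≤ K * s (g - u))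
    (hu : s (f - u) ≤ s (f - g)) :
    ‖f - u‖ ≤ (2 * K * c + 1) * ‖f - g‖ :=
  calc ‖f - u‖ ≤ ‖f - g‖ + ‖g - u‖ := norm_sub_le_norm_sub_add_norm_sub f g u
    _ ≤ ‖f - g‖ + K * s (g - u) := by gcongr
    _ ≤ ‖f - g‖ + K * (2 * s (f - g)) := by
        gcongr
        exact addGroupSeminorm_sub_le_two_mul_of_le hu
    _ ≤ ‖f - g‖ + K * (2 * (c * ‖f - g‖)) := by gcongr
    _ = (2 * K * c + 1) * ‖f - g‖ := by ring

theorem norm_sub_le_mul_infDist_of_minimizer {S : Type*} [SetLike S V] [AddSubgroupClass S V]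
    {X : S} (hK : 0 ≤ K) (hc : 0 ≤ c) (hs : ∀ v, s v ≤ c * ‖v‖)
    (hX : ∀ v ∈ X, ‖v‖ ≤ K * s v) (hu : u ∈ X) (hmin : ∀ g ∈ X, s (f - u) ≤ s (f - g)) :
    ‖f - u‖ ≤ (2 * K * c + 1) * infDist f (X : Set V) := by
  have hpos : 0 < 2 * K * c + 1 := by positivity
  rw [← div_le_iff₀' hpos, le_infDist ⟨u, hu⟩]
  intro g hg
  rw [div_le_iff₀' hpos, dist_eq_norm]
  exact norm_sub_le_mul_norm_sub_of_addGroupSeminorm_le hK (hs _) (hX _ (sub_mem hg hu))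
    (hmin g hg)

end Minimizer

section WeightedLp

variable {ι E : Type*} [Fintype ι] [SeminormedAddCommGroup E] {p : ℝ} {w : ι → ℝ}

theorem mul_rpow_eq_rpow_one_div_mul_rpow (hp : p ≠ 0) {a x : ℝ} (ha : 0 ≤ a) (hx : 0 ≤ x) :
    a * x ^ p = (a ^ (1 / p) * x) ^ p := by
  rw [Real.mul_rpow (by positivity) hx, one_div, Real.rpow_inv_rpow ha hp]

theorem weighted_Lp_add_le (hp : 1 ≤ p) (hw : ∀ j, 0 ≤ w j) {a b : ι → ℝ}
    (ha : ∀ j, 0 ≤ a j) (hb : ∀ j, 0 ≤ b j) :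
    (∑ j, w j * (a j + b j) ^ p) ^ (1 / p) ≤
      (∑ j, w j * a j ^ p) ^ (1 / p) + (∑ j, w j * b j ^ p) ^ (1 / p) := by
  have hp₀ : p ≠ 0 := by positivity
  have absorb_weight (j : ι) {x : ℝ} (hx : 0 ≤ x) : w j * x ^ p = (w j ^ (1 / p) * x) ^ p :=
    mul_rpow_eq_rpow_one_div_mul_rpow hp₀ (hw j) hx
  have hwj (j : ι) : 0 ≤ w j ^ (1 / p) := Real.rpow_nonneg (hw j) _
  simp only [absorb_weight _ (ha _), absorb_weight _ (hb _),
    absorb_weight _ (add_nonneg (ha _) (hb _)), mul_add]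
  exact Real.Lp_add_le_of_nonneg Finset.univ hp (fun j _ => mul_nonneg (hwj j) (ha j))
    (fun j _ => mul_nonneg (hwj j) (hb j))

theorem weighted_Lp_le_of_le (hp : 0 < p) (hw : ∀ j, 0 ≤ w j) {W : ℝ} (hW : ∑ j, w j ≤ W)
    {a : ι → ℝ} (ha : ∀ j, 0 ≤ a j) {B : ℝ} (hB : 0 ≤ B) (haB : ∀ j, a j ≤ B) :
    (∑ j, w j * a j ^ p) ^ (1 / p) ≤ W ^ (1 / p) * B := by
  have hW₀ : 0 ≤ W := (Finset.sum_nonneg fun j _ => hw j).trans hW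
  have hsum : ∑ j, w j * a j ^ p ≤ W * B ^ p :=
    calc ∑ j, w j * a j ^ p ≤ ∑ j, w j * B ^ p := by
          gcongr with j
          exacts [hw j, ha j, haB j]
      _ = (∑ j, w j) * B ^ p := (Finset.sum_mul ..).symm
      _ ≤ W * B ^ p := by gcongr
  calc (∑ j, w j * a j ^ p) ^ (1 / p) ≤ (W * B ^ p) ^ (1 / p) := by
        gcongr
        exact Finset.sum_nonneg fun j _ => mul_nonneg (hw j) (Real.rpow_nonneg (ha j) p)
    _ = W ^ (1 / p) * B := by
        rw [Real.mul_rpow hW₀ (by positivity), one_div, Real.rpow_rpow_inv hB hp.ne']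

/-- The weighted discrete `ℓ_p` seminorm `(∑ j, w j * ‖v (ξ j)‖ ^ p) ^ (1 / p)` of the samples of a
continuous function at the points `ξ j`. It is only an additive-group seminorm, so that `E` need not
carry any scalar action. -/
noncomputable def sampleSeminorm {Ω : Type*} [TopologicalSpace Ω] (hp : 1 ≤ p)
    (hw : ∀ j, 0 ≤ w j) (ξ : ι → Ω) : AddGroupSeminorm C(Ω, E) where
  toFun v := (∑ j, w j * ‖v (ξ j)‖ ^ p) ^ (1 / p)
  map_zero' := by
    have hp₀ : p ≠ 0 := by positivity
    simp [hp₀]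
  add_le' v v' := by
    refine le_trans ?_ (weighted_Lp_add_le hp hw (fun j => norm_nonneg (v (ξ j)))
      (fun j => norm_nonneg (v' (ξ j))))
    gcongr with j
    · exact Finset.sum_nonneg fun j _ => mul_nonneg (hw j) (by positivity)
    · exact hw j
    · exact norm_add_le _ _
  neg' v := by simp

theorem sampleSeminorm_le_mul_norm {Ω : Type*} [TopologicalSpace Ω] [CompactSpace Ω] (hp : 1 ≤ p)
    (hw : ∀ j, 0 ≤ w j) (ξ : ι → Ω) {W : ℝ} (hW : ∑ j, w j ≤ W) (v : C(Ω, E)) :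
    sampleSeminorm hp hw ξ v ≤ W ^ (1 / p) * ‖v‖ :=
  weighted_Lp_le_of_le (zero_lt_one.trans_le hp) hw hW (fun _ => norm_nonneg _) (norm_nonneg v)
    (fun j => v.norm_coe_le_norm (ξ j))

end WeightedLp

section UniformNorm

variable {Ω : Type*} [TopologicalSpace Ω] [CompactSpace Ω]

theorem supNorm_eq_norm (h : C(Ω, ℝ)) : supNorm h = ‖h‖ :=
  h.norm_eq_iSup_norm.symm

theorem distInfty_eq_infDist (f : C(Ω, ℝ)) (X : Submodule ℝ C(Ω, ℝ)) :
    distInfty f X = infDist f (X : Set C(Ω, ℝ)) := by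
  rw [infDist_eq_iInf]
  refine iInf_congr fun g => ?_
  rw [dist_eq_norm]
  exact supNorm_eq_norm (f - (g : C(Ω, ℝ)))

end UniformNorm

theorem stmt_10_general {Ω E ι S : Type*} [TopologicalSpace Ω] [CompactSpace Ω]
    [SeminormedAddCommGroup E] [Fintype ι] [SetLike S C(Ω, E)] [AddSubgroupClass S C(Ω, E)]
    {p : ℝ} (hp : 1 ≤ p) {X : S} {ξ : ι → Ω} {w : ι → ℝ} (hw : ∀ j, 0 ≤ w j)
    {K : ℝ} (hK : 0 ≤ K) (hX : ∀ v ∈ X, ‖v‖ ≤ K * (∑ j, w j * ‖v (ξ j)‖ ^ p) ^ (1 / p))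
    {W : ℝ} (hW : ∑ j, w j ≤ W) {f u : C(Ω, E)} (hu : u ∈ X)
    (hmin : ∀ g ∈ X, (∑ j, w j * ‖f (ξ j) - u (ξ j)‖ ^ p) ^ (1 / p)
      ≤ (∑ j, w j * ‖f (ξ j) - g (ξ j)‖ ^ p) ^ (1 / p)) :
    ‖f - u‖ ≤ (2 * K * W ^ (1 / p) + 1) * infDist f (X : Set C(Ω, E)) := by
  have hW₀ : 0 ≤ W := (Finset.sum_nonneg fun j _ => hw j).trans hW
  exact norm_sub_le_mul_infDist_of_minimizer (s := sampleSeminorm hp hw ξ) hK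
    (Real.rpow_nonneg hW₀ _) (sampleSeminorm_le_mul_norm hp hw ξ hW) hX hu hmin

/-- Theorem 5.1: under the weighted LDI (A1), the weight bound (A2) and the
Nikol'skii inequality `‖u‖_∞ ≤ M‖u‖_p`, any minimizer `u ∈ X_N` of the discrete weighted
`ℓ_p` distance to the data of `f` satisfies `‖f - u‖_∞ ≤ (2MDW^{1/p} + 1) d(f,X_N)_∞`. -/
theorem stmt_10 (d : ℕ) (Ω : Set (Fin d → ℝ)) (hΩ : IsCompact Ω)
    (μ : Measure Ω) [IsProbabilityMeasure μ]
    (p : ℝ) (hp : 1 ≤ p)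
    (N : ℕ) (X : Submodule ℝ C(Ω, ℝ)) (hdim : Module.finrank ℝ X = N)
    (m : ℕ) (ξ : Fin m → Ω) (w : Fin m → ℝ) (hw : ∀ j, 0 < w j)
    (D : ℝ) (hD : 0 < D)
    (hA1 : ∀ u ∈ X, LpNorm μ p ⇑u ≤ D * (∑ j, w j * |u (ξ j)| ^ p) ^ (1 / p))
    (W : ℝ) (hW : 0 < W) (hA2 : ∑ j, w j ≤ W)
    (M : ℝ) (hM : 0 < M)
    (hNik : ∀ u ∈ X, supNorm ⇑u ≤ M * LpNorm μ p ⇑u)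
    (f : C(Ω, ℝ)) (u : C(Ω, ℝ)) (hu_mem : u ∈ X)
    (hu_min : ∀ g ∈ X,
      (∑ j, w j * |f (ξ j) - u (ξ j)| ^ p) ^ (1 / p)
        ≤ (∑ j, w j * |f (ξ j) - g (ξ j)| ^ p) ^ (1 / p)) :
    supNorm (fun ω => f ω - u ω) ≤ (2 * M * D * W ^ (1 / p) + 1) * distInfty f X := by
  have : CompactSpace Ω := isCompact_iff_compactSpace.mp hΩ
  have hX (v : C(Ω, ℝ)) (hv : v ∈ X) : ‖v‖ ≤ M * D * (∑ j, w j * ‖v (ξ j)‖ ^ p) ^ (1 / p) :=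
    calc ‖v‖ = supNorm v := (supNorm_eq_norm v).symm
      _ ≤ M * LpNorm μ p v := hNik v hv
      _ ≤ M * (D * (∑ j, w j * ‖v (ξ j)‖ ^ p) ^ (1 / p)) := by gcongr; exact hA1 v hv
      _ = M * D * (∑ j, w j * ‖v (ξ j)‖ ^ p) ^ (1 / p) := (mul_assoc ..).symm
  rw [distInfty_eq_infDist, mul_assoc 2 M D]
  exact (supNorm_eq_norm (f - u)).trans_le
    (stmt_10_general hp (fun j => (hw j).le) (by positivity) hX hA2 hu_mem hu_min)
end

section
/- Let m, v, N ∈ ℕ with v ≤ N, let Ω be a compact subset of ℝ^d with a Borel probability measure μ, let 1 ≤ p < ∞, and let D_N = {g_1,…,g_N} ⊂ C(Ω) be a system of N functions. For each J ⊆ {1,…,N} with |J| = v put X_J := span{g_i : i ∈ J}, and let Σ_v(D_N) be the union of all such X_J. Assume points ξ^1,…,ξ^m ∈ Ω are such that ‖u‖_p ≤ D max_{1≤j≤m}|u(ξ^j)| for every u ∈ Σ_v(D_N). Let f ∈ C(Ω) and suppose that for each J with |J| = v a function u_J ∈ X_J satisfies max_{1≤j≤m}|f(ξ^j) − u_J(ξ^j)|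 ≤ max_{1≤j≤m}|f(ξ^j) − g(ξ^j)| for all g ∈ X_J. Then min over all J with |J| = v of ‖f − u_J‖_p is at most (2D + 1) σ_v(f, D_N)_∞. -/
open MeasureTheory

/-- `Σ_v(D_N)`: the set of `v`-term approximants with respect to the system `g`. -/
def sigmaSet {Ω : Type*} [TopologicalSpace Ω] {N : ℕ} (v : ℕ) (g : Fin N → C(Ω, ℝ)) :
    Set C(Ω, ℝ) :=
  {u | ∃ J : Finset (Fin N), J.card = v ∧ u ∈ Submodule.span ℝ (g '' ↑J)}

/-- `σ_v(f, D_N)_∞`: the best `v`-term approximation of `f` in the uniform norm. -/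
noncomputable def bestVTerm {Ω : Type*} [TopologicalSpace Ω] {N : ℕ}
    (v : ℕ) (g : Fin N → C(Ω, ℝ)) (f : C(Ω, ℝ)) : ℝ :=
  ⨅ h : sigmaSet v g, supNorm (fun ω => f ω - (h : C(Ω, ℝ)) ω)

/-!
Let `h ∈ X_J` be any competitor. Both `h` and `u_J` lie within `‖f - h‖_∞` of `f` at the points
`ξ^j`, the latter because `u_J` is a discrete minimizer over `X_J ∋ h`. Hence `h - u_J ∈ X_J` is at
most `2 ‖f - h‖_∞` there, the discretization inequality gives `‖h - u_J‖_p ≤ 2 D ‖f - h‖_∞`, and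
the remaining `‖f - h‖_p ≤ ‖f - h‖_∞` supplies the `+ 1`.
-/

theorem LpNorm_eq_lpNorm {Ω : Type*} [MeasurableSpace Ω] {μ : Measure Ω} {p : ℝ} (hp : 0 < p)
    {f : Ω → ℝ} (hf : AEStronglyMeasurable f μ) :
    LpNorm μ p f = lpNorm f (ENNReal.ofReal p) μ := by
  rw [lpNorm_eq_integral_norm_rpow_toReal (ENNReal.ofReal_pos.2 hp).ne' ENNReal.ofReal_ne_top hf,
    ENNReal.toReal_ofReal hp.le]
  simp only [LpNorm, Real.norm_eq_abs, one_div]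

theorem LpNorm_add_le {Ω : Type*} [MeasurableSpace Ω] {μ : Measure Ω} {p : ℝ} (hp : 1 ≤ p)
    {f g : Ω → ℝ} (hf : MemLp f (ENNReal.ofReal p) μ) (hg : AEStronglyMeasurable g μ) :
    LpNorm μ p (f + g) ≤ LpNorm μ p f + LpNorm μ p g := by
  have hp₀ : 0 < p := one_pos.trans_le hp
  rw [LpNorm_eq_lpNorm hp₀ (hf.1.add hg), LpNorm_eq_lpNorm hp₀ hf.1, LpNorm_eq_lpNorm hp₀ hg]
  exact lpNorm_add_le hf (ENNReal.one_le_ofReal.2 hp)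

theorem LpNorm_le_of_forall_abs_le {Ω : Type*} [MeasurableSpace Ω] {μ : Measure Ω}
    [IsProbabilityMeasure μ] {p : ℝ} (hp : 0 < p) {f : Ω → ℝ} (hf : AEStronglyMeasurable f μ)
    {C : ℝ} (hfC : ∀ ω, |f ω| ≤ C) : LpNorm μ p f ≤ C := by
  obtain ⟨ω₀⟩ := nonempty_of_isProbabilityMeasure μ
  have hC : 0 ≤ C := (abs_nonneg (f ω₀)).trans (hfC ω₀)
  rw [LpNorm_eq_lpNorm hp hf]
  calc lpNorm f (ENNReal.ofReal p) μ
      ≤ lpNorm (fun _ => C) (ENNReal.ofReal p) μ := lpNorm_mono_real (memLp_const C) hfC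
    _ = C := by
      rw [lpNorm_const (ENNReal.ofReal_pos.2 hp).ne' (IsProbabilityMeasure.ne_zero μ)]
      simp [abs_of_nonneg hC]

section CompactSpace

variable {Ω : Type*} [TopologicalSpace Ω] [CompactSpace Ω]

theorem supNorm_coe_eq_norm (f : C(Ω, ℝ)) : supNorm f = ‖f‖ :=
  f.norm_eq_iSup_norm.symm

theorem bestVTerm_eq_iInf_norm_sub {N : ℕ} (v : ℕ) (g : Fin N → C(Ω, ℝ)) (f : C(Ω, ℝ)) :
    bestVTerm v g f = ⨅ h : sigmaSet v g, ‖f - (h : C(Ω, ℝ))‖ :=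
  iInf_congr fun h => supNorm_coe_eq_norm (f - (h : C(Ω, ℝ)))

theorem iSup_abs_comp_le_norm {ι : Type*} (f : C(Ω, ℝ)) (ξ : ι → Ω) :
    ⨆ j, |f (ξ j)| ≤ ‖f‖ :=
  Real.iSup_le (fun j => f.norm_coe_le_norm (ξ j)) (norm_nonneg f)

theorem abs_comp_le_iSup_abs_comp {ι : Type*} (f : C(Ω, ℝ)) (ξ : ι → Ω) (i : ι) :
    |f (ξ i)| ≤ ⨆ j, |f (ξ j)| :=
  le_ciSup (f := fun j => |f (ξ j)|)
    ⟨‖f‖, Set.forall_mem_range.2 fun j => f.norm_coe_le_norm (ξ j)⟩ i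

theorem iSup_abs_sub_comp_le_of_discrete_minimizer {ι : Type*} {ξ : ι → Ω} {f u h : C(Ω, ℝ)}
    (hmin : ⨆ j, |(f - u) (ξ j)| ≤ ⨆ j, |(f - h) (ξ j)|) :
    ⨆ j, |(h - u) (ξ j)| ≤ 2 * ‖f - h‖ := by
  refine Real.iSup_le (fun j => ?_) (by positivity)
  have hfu : |f (ξ j) - u (ξ j)| ≤ ‖f - h‖ :=
    (abs_comp_le_iSup_abs_comp (f - u) ξ j).trans (hmin.trans (iSup_abs_comp_le_norm (f - h) ξ))
  have hhf : |h (ξ j) - f (ξ j)| ≤ ‖f - h‖ := by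
    rw [abs_sub_comm]
    exact (f - h).norm_coe_le_norm (ξ j)
  calc |h (ξ j) - u (ξ j)|
      ≤ |h (ξ j) - f (ξ j)| + |f (ξ j) - u (ξ j)| := abs_sub_le _ _ _
    _ ≤ 2 * ‖f - h‖ := by linarith

variable [MeasurableSpace Ω] [OpensMeasurableSpace Ω] {μ : Measure Ω} [IsProbabilityMeasure μ]
  {p : ℝ}

theorem LpNorm_sub_le_of_discrete_minimizer (hp : 1 ≤ p) {ι : Type*} {ξ : ι → Ω} {D : ℝ}
    (hD : 0 ≤ D) {f u h : C(Ω, ℝ)} (hLDI : LpNorm μ p ⇑(h - u) ≤ D * ⨆ j, |(h - u) (ξ j)|)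
    (hmin : ⨆ j, |(f - u) (ξ j)| ≤ ⨆ j, |(f - h) (ξ j)|) :
    LpNorm μ p ⇑(f - u) ≤ (2 * D + 1) * ‖f - h‖ := by
  have memLp_coe (w : C(Ω, ℝ)) : MemLp w (ENNReal.ofReal p) μ :=
    w.continuous.memLp_of_hasCompactSupport (.of_compactSpace w)
  calc LpNorm μ p ⇑(f - u)
      = LpNorm μ p (⇑(f - h) + ⇑(h - u)) := by rw [← ContinuousMap.coe_add, sub_add_sub_cancel]
    _ ≤ LpNorm μ p ⇑(f - h) + LpNorm μ p ⇑(h - u) :=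
      LpNorm_add_le hp (memLp_coe (f - h)) (memLp_coe (h - u)).1
    _ ≤ ‖f - h‖ + D * (2 * ‖f - h‖) := by
      gcongr
      · exact LpNorm_le_of_forall_abs_le (one_pos.trans_le hp) (memLp_coe (f - h)).1
          (f - h).norm_coe_le_norm
      · exact hLDI.trans (by gcongr; exact iSup_abs_sub_comp_le_of_discrete_minimizer hmin)
    _ = (2 * D + 1) * ‖f - h‖ := by ring

theorem stmt_15_general (hp : 1 ≤ p) {ι : Type*} {v N : ℕ} (hvN : v ≤ N) (g : Fin N → C(Ω, ℝ))
    (ξ : ι → Ω) {D : ℝ} (hD : 0 ≤ D)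
    (hLDI : ∀ u ∈ sigmaSet v g, LpNorm μ p ⇑u ≤ D * ⨆ j, |u (ξ j)|)
    (f : C(Ω, ℝ)) (uJ : Finset (Fin N) → C(Ω, ℝ))
    (huJ_mem : ∀ J : Finset (Fin N), J.card = v → uJ J ∈ Submodule.span ℝ (g '' ↑J))
    (huJ_min : ∀ J : Finset (Fin N), J.card = v →
      ∀ h ∈ Submodule.span ℝ (g '' ↑J),
        (⨆ j, |f (ξ j) - uJ J (ξ j)|) ≤ ⨆ j, |f (ξ j) - h (ξ j)|) :
    (⨅ J : {J : Finset (Fin N) // J.card = v},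
        LpNorm μ p (fun ω => f ω - uJ J.val ω))
      ≤ (2 * D + 1) * bestVTerm v g f := by
  obtain ⟨J₀, -, hJ₀⟩ := Finset.exists_subset_card_eq (s := (Finset.univ : Finset (Fin N)))
    (hvN.trans_eq (Finset.card_fin N).symm)
  have : Nonempty (sigmaSet v g) := ⟨uJ J₀, J₀, hJ₀, huJ_mem J₀ hJ₀⟩
  rw [bestVTerm_eq_iInf_norm_sub, Real.mul_iInf_of_nonneg (by positivity)]
  refine le_ciInf fun ⟨h, J, hJ, hhJ⟩ => ?_
  have hsub : h - uJ J ∈ sigmaSet v g := ⟨J, hJ, sub_mem hhJ (huJ_mem J hJ)⟩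
  exact (ciInf_le (Set.finite_range _).bddBelow ⟨J, hJ⟩).trans
    (LpNorm_sub_le_of_discrete_minimizer hp hD (hLDI _ hsub) (huJ_min J hJ h hhJ))

end CompactSpace

/-- Theorem 6.1: under the universal LDI(p,∞) for the collection `X_v(D_N)`,
if for every `J` of cardinality `v` the element `u_J ∈ X_J` minimizes the discrete uniform
distance to the data of `f`, then `min_J ‖f - u_J‖_p ≤ (2D + 1) σ_v(f, D_N)_∞`. -/
theorem stmt_15 (dd : ℕ) (Ω : Set (Fin dd → ℝ)) (hΩ : IsCompact Ω)
    (μ : Measure Ω) [IsProbabilityMeasure μ]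
    (p : ℝ) (hp : 1 ≤ p)
    (m v N : ℕ) (hvN : v ≤ N)
    (g : Fin N → C(Ω, ℝ))
    (ξ : Fin m → Ω) (D : ℝ) (hD : 0 < D)
    (hLDI : ∀ u ∈ sigmaSet v g, LpNorm μ p ⇑u ≤ D * ⨆ j, |u (ξ j)|)
    (f : C(Ω, ℝ)) (uJ : Finset (Fin N) → C(Ω, ℝ))
    (huJ_mem : ∀ J : Finset (Fin N), J.card = v → uJ J ∈ Submodule.span ℝ (g '' ↑J))
    (huJ_min : ∀ J : Finset (Fin N), J.card = v →
      ∀ h ∈ Submodule.span ℝ (g '' ↑J),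
        (⨆ j, |f (ξ j) - uJ J (ξ j)|) ≤ ⨆ j, |f (ξ j) - h (ξ j)|) :
    (⨅ J : {J : Finset (Fin N) // J.card = v},
        LpNorm μ p (fun ω => f ω - uJ J.val ω))
      ≤ (2 * D + 1) * bestVTerm v g f := by
  have : CompactSpace Ω := isCompact_iff_compactSpace.1 hΩ
  exact stmt_15_general hp hvN g ξ hD.le hLDI f uJ huJ_mem huJ_min
end
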